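/- An almost quaternion-Hermitian manifold M of dimension 4n ≥ 8 is QKT (i.e. its intrinsic torsion lies in (K+E)H) if and only if there exists a metric connection ∇^QKT = ∇ + (1/2)T that is quaternionic and whose (0,3)-torsion T(X,Y,Z) = g(X,T(Y,Z)) is a skew-symmetric three-form lying in (K+E)H, i.e. in the +3-eigenspace of 𝓛 = Σ_{A=I,J,K}(A_{(12)}+A_{(13)}+A_{(23)}). When M is QKT, ∇^QKT is the unique Sp(n)Sp(1)-connection on M with skew-symmetric torsion, the intrinsic torsion is given by ⟨Y, ξ_X Z⟩ = (−(3/8)T + (1/8)Σ_A A_{(23)}T − (1/4n)Σ_A A t ⊗ ω_A)(X,Y,Z) with t = IΛ_I T, and T = −(1/6) d*Ω − (1/(12(n−1))) Σ_{A=I,J,K} Aθ^{d*Ω} ∧ ω_A. -/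

import Mathlib

/-!  Synthetic (Koszul-style) model of an almost quaternion-Hermitian `4n`-manifold.

`C` plays the role of the commutative ℝ-algebra of smooth functions and `V` that of
the `C`-module of vector fields, equipped with a directional derivative `D`, a Lie
bracket, a Riemannian metric `g` together with its Levi-Civita connection `nab`
(characterised by being torsion-free and metric), a local adapted basis `I, J, K`
of anticommuting almost complex structures with `K = I J`, each compatible with the
metric, and a (local) orthonormal frame.  -/

noncomputable section

open scoped BigOperators

structure AQH (n : ℕ) (C : Type*) (V : Type*) [CommRing C] [Algebra ℝ C]
    [AddCommGroup V] [Module C V] where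
  /-- derivative of a function along a vector field -/
  D : V → C → C
  D_add : ∀ X f g, D X (f + g) = D X f + D X g
  D_mul : ∀ X f g, D X (f * g) = f * D X g + g * D X f
  D_const : ∀ X (r : ℝ), D X (algebraMap ℝ C r) = 0
  D_addX : ∀ X Y f, D (X + Y) f = D X f + D Y f
  D_smulX : ∀ (f : C) (X : V) (h : C), D (f • X) h = f * D X h
  /-- the Lie bracket of vector fields -/
  bracket : V → V → V
  bracket_skew : ∀ X Y, bracket X Y = -bracket Y X
  bracket_add : ∀ X Y Z, bracket X (Y + Z) = bracket X Y + bracket X Z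
  bracket_smul : ∀ X (f : C) Y, bracket X (f • Y) = f • bracket X Y + (D X f) • Y
  bracket_jacobi : ∀ X Y Z,
    bracket X (bracket Y Z) + bracket Y (bracket Z X) + bracket Z (bracket X Y) = 0
  D_bracket : ∀ X Y f, D (bracket X Y) f = D X (D Y f) - D Y (D X f)
  /-- the Riemannian metric -/
  g : V → V → C
  g_symm : ∀ X Y, g X Y = g Y X
  g_add : ∀ X Y Z, g (X + Y) Z = g X Z + g Y Z
  g_smul : ∀ (f : C) X Y, g (f • X) Y = f * g X Y
  /-- the Levi-Civita connection -/
  nab : V → V → V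
  nab_addX : ∀ X Y Z, nab (X + Y) Z = nab X Z + nab Y Z
  nab_smulX : ∀ (f : C) X Y, nab (f • X) Y = f • nab X Y
  nab_add : ∀ X Y Z, nab X (Y + Z) = nab X Y + nab X Z
  nab_leibniz : ∀ X (f : C) Y, nab X (f • Y) = f • nab X Y + (D X f) • Y
  torsion_free : ∀ X Y, nab X Y - nab Y X = bracket X Y
  nab_metric : ∀ X Y Z, D X (g Y Z) = g (nab X Y) Z + g Y (nab X Z)
  /-- the (local) adapted basis of almost complex structures -/
  I : V → V
  J : V → V
  K : V → V
  I_lin : ∀ (f : C) X Y, I (f • X + Y) = f • I X + I Y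
  J_lin : ∀ (f : C) X Y, J (f • X + Y) = f • J X + J Y
  K_lin : ∀ (f : C) X Y, K (f • X + Y) = f • K X + K Y
  I_sq : ∀ X, I (I X) = -X
  J_sq : ∀ X, J (J X) = -X
  K_def : ∀ X, K X = I (J X)
  anticomm : ∀ X, I (J X) = -J (I X)
  I_metric : ∀ X Y, g (I X) (I Y) = g X Y
  J_metric : ∀ X Y, g (J X) (J Y) = g X Y
  /-- a (local) orthonormal frame -/
  frame : Fin (4 * n) → V
  frame_orthonormal : ∀ i j, g (frame i) (frame j) = if i = j then 1 else 0
  frame_span : ∀ X, X = ∑ i, g X (frame i) • frame i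

namespace AQH

section ops

variable {C V : Type*} [CommRing C]

/-- the operator `A_(1)` on covariant 3-tensors -/
def op1 (A : V → V) (ψ : V → V → V → C) : V → V → V → C := fun X Y Z => -ψ (A X) Y Z

/-- the operator `A_(2)` on covariant 3-tensors -/
def op2 (A : V → V) (ψ : V → V → V → C) : V → V → V → C := fun X Y Z => -ψ X (A Y) Z

/-- the operator `A_(3)` on covariant 3-tensors -/
def op3 (A : V → V) (ψ : V → V → V → C) : V → V → V → C := fun X Y Z => -ψ X Y (A Z)

/-- the operator `A_(12) = A_(1) A_(2)` on covariant 3-tensors -/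
def op12 (A : V → V) (ψ : V → V → V → C) : V → V → V → C := fun X Y Z => ψ (A X) (A Y) Z

/-- the operator `A_(13) = A_(1) A_(3)` on covariant 3-tensors -/
def op13 (A : V → V) (ψ : V → V → V → C) : V → V → V → C := fun X Y Z => ψ (A X) Y (A Z)

/-- the operator `A_(23) = A_(2) A_(3)` on covariant 3-tensors -/
def op23 (A : V → V) (ψ : V → V → V → C) : V → V → V → C := fun X Y Z => ψ X (A Y) (A Z)

/-- the operator `𝓛_A = A_(12) + A_(13) + A_(23)` on three-forms -/
def calL (A : V → V) (ψ : V → V → V → C) : V → V → V → C :=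
  fun X Y Z => op12 A ψ X Y Z + op13 A ψ X Y Z + op23 A ψ X Y Z

/-- the action `(A ν)(X) = -ν (A X)` of `A` on a one-form -/
def act1 (A : V → V) (ν : V → C) : V → C := fun X => -ν (A X)

/-- the action `(A ψ)(X,Y,Z) = -ψ(AX,AY,AZ)` of `A` on a three-form -/
def act3 (A : V → V) (ψ : V → V → V → C) : V → V → V → C :=
  fun X Y Z => -ψ (A X) (A Y) (A Z)

/-- wedge product of two one-forms -/
def wedge11 (α β : V → C) : V → V → C := fun X Y => α X * β Y - α Y * β X

/-- wedge product of a one-form and a two-form -/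
def wedge12 (ν : V → C) (ω : V → V → C) : V → V → V → C :=
  fun X Y Z => ν X * ω Y Z - ν Y * ω X Z + ν Z * ω X Y

/-- wedge product of two two-forms -/
def wedge22 (α β : V → V → C) : V → V → V → V → C := fun X Y Z W =>
  α X Y * β Z W - α X Z * β Y W + α X W * β Y Z
    + α Z W * β X Y - α Y W * β X Z + α Y Z * β X W

/-- a (0,3)-tensor is an alternating three-form -/
def IsAlt3 (T : V → V → V → C) : Prop :=
  (∀ X Y Z, T Y X Z = -T X Y Z) ∧ (∀ X Y Z, T X Z Y = -T X Y Z)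

variable [AddCommGroup V] [Module C V]

/-- `C`-linearity (tensoriality) of a three-form in its first argument -/
def Lin3 (T : V → V → V → C) : Prop :=
  ∀ (f : C) X X' Y Z, T (f • X + X') Y Z = f * T X Y Z + T X' Y Z

/-- `C`-linearity (tensoriality) of a one-form -/
def Lin1 (ν : V → C) : Prop := ∀ (f : C) X X', ν (f • X + X') = f * ν X + ν X'

end ops

section derived

variable {n : ℕ} {C V : Type*} [CommRing C] [Algebra ℝ C] [AddCommGroup V] [Module C V]
  [Module ℝ V] [IsScalarTower ℝ C V]

variable (M : AQH n C V)

/-- the Kähler form `ω_A(X,Y) = g(X, A Y)` -/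
def omega (A : V → V) : V → V → C := fun X Y => M.g X (A Y)

/-- `(∇_X A) Y` -/
def nabA (A : V → V) : V → V → V := fun X Y => M.nab X (A Y) - A (M.nab X Y)

/-- covariant derivative of a 2-form: `(∇_X ψ)(Y,Z)` -/
def nab2 (ψ : V → V → C) : V → V → V → C :=
  fun X Y Z => M.D X (ψ Y Z) - ψ (M.nab X Y) Z - ψ Y (M.nab X Z)

/-- covariant derivative of a 4-form -/
def nab4 (ψ : V → V → V → V → C) : V → V → V → V → V → C :=
  fun X Y Z W U => M.D X (ψ Y Z W U) - ψ (M.nab X Y) Z W U - ψ Y (M.nab X Z) W U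
    - ψ Y Z (M.nab X W) U - ψ Y Z W (M.nab X U)

/-- exterior derivative of a one-form -/
def d1 (ν : V → C) : V → V → C :=
  fun X Y => M.D X (ν Y) - M.D Y (ν X) - ν (M.bracket X Y)

/-- exterior derivative of a two-form -/
def d2 (ψ : V → V → C) : V → V → V → C :=
  fun X Y Z => M.D X (ψ Y Z) - M.D Y (ψ X Z) + M.D Z (ψ X Y)
    - ψ (M.bracket X Y) Z + ψ (M.bracket X Z) Y - ψ (M.bracket Y Z) X

/-- exterior derivative of a four-form -/
def d4 (ψ : V → V → V → V → C) : V → V → V → V → V → C := fun X Y Z W U =>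
  M.D X (ψ Y Z W U) - M.D Y (ψ X Z W U) + M.D Z (ψ X Y W U) - M.D W (ψ X Y Z U)
      + M.D U (ψ X Y Z W)
    - ψ (M.bracket X Y) Z W U + ψ (M.bracket X Z) Y W U - ψ (M.bracket X W) Y Z U
      + ψ (M.bracket X U) Y Z W
    - ψ (M.bracket Y Z) X W U + ψ (M.bracket Y W) X Z U - ψ (M.bracket Y U) X Z W
    - ψ (M.bracket Z W) X Y U + ψ (M.bracket Z U) X Y W
    - ψ (M.bracket W U) X Y Z

/-- the Nijenhuis tensor `N_A(X,Y)` -/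
def nijV (A : V → V) : V → V → V := fun X Y =>
  M.bracket X Y + A (M.bracket (A X) Y) + A (M.bracket X (A Y)) - M.bracket (A X) (A Y)

/-- the Nijenhuis `(0,3)`-tensor `N_A(X,Y,Z) = g(X, N_A(Y,Z))` -/
def nij3 (A : V → V) : V → V → V → C := fun X Y Z => M.g X (M.nijV A Y Z)

/-- the induced inner product of two 2-forms,
`⟨ψ,φ⟩ = (1/2!) ψ(e_i,e_j) φ(e_i,e_j)` -/
def inner2 (ψ φ : V → V → C) : C :=
  (1/2 : ℝ) • ∑ i, ∑ j, ψ (M.frame i) (M.frame j) * φ (M.frame i) (M.frame j)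

/-- the contraction `(Λ_A β)(X) = ⟨X ⌟ β, ω_A⟩` of a three-form -/
def Lam (A : V → V) (β : V → V → V → C) : V → C :=
  fun X => (1/2 : ℝ) •
    ∑ i, ∑ j, β X (M.frame i) (M.frame j) * M.omega A (M.frame i) (M.frame j)

/-- `λ_I(X) = (1/2n) ⟨∇_X ω_J, ω_K⟩` -/
def lambdaI : V → C := fun X =>
  (1/(2*(n:ℝ))) • M.inner2 (fun Y Z => M.nab2 (M.omega M.J) X Y Z) (M.omega M.K)

/-- `λ_J(X) = (1/2n) ⟨∇_X ω_K, ω_I⟩` -/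
def lambdaJ : V → C := fun X =>
  (1/(2*(n:ℝ))) • M.inner2 (fun Y Z => M.nab2 (M.omega M.K) X Y Z) (M.omega M.I)

/-- `λ_K(X) = (1/2n) ⟨∇_X ω_I, ω_J⟩` -/
def lambdaK : V → C := fun X =>
  (1/(2*(n:ℝ))) • M.inner2 (fun Y Z => M.nab2 (M.omega M.I) X Y Z) (M.omega M.J)

/-- codifferential of a two-form -/
def codiff2 (ψ : V → V → C) : V → C := fun Z => -∑ i, M.nab2 ψ (M.frame i) (M.frame i) Z

/-- codifferential of a four-form -/
def codiff4 (ψ : V → V → V → V → C) : V → V → V → C :=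
  fun X Y Z => -∑ i, M.nab4 ψ (M.frame i) (M.frame i) X Y Z

/-- `β_I = J dω_J + K dω_K` -/
def betaI : V → V → V → C := fun X Y Z =>
  act3 M.J (M.d2 (M.omega M.J)) X Y Z + act3 M.K (M.d2 (M.omega M.K)) X Y Z

/-- `β_J = K dω_K + I dω_I` -/
def betaJ : V → V → V → C := fun X Y Z =>
  act3 M.K (M.d2 (M.omega M.K)) X Y Z + act3 M.I (M.d2 (M.omega M.I)) X Y Z

/-- `β_K = I dω_I + J dω_J` -/
def betaK : V → V → V → C := fun X Y Z =>
  act3 M.I (M.d2 (M.omega M.I)) X Y Z + act3 M.J (M.d2 (M.omega M.J)) X Y Z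

/-- the intrinsic torsion
`ξ_X Y = -(1/4) Σ_A A (∇_X A) Y + (1/2) Σ_A λ_A(X) A Y` -/
def xi : V → V → V := fun X Y =>
  (-(1/4 : ℝ)) • (M.I (M.nabA M.I X Y) + M.J (M.nabA M.J X Y) + M.K (M.nabA M.K X Y))
    + (1/2 : ℝ) • (M.lambdaI X • M.I Y + M.lambdaJ X • M.J Y + M.lambdaK X • M.K Y)

/-- the one-form `ν^I_4 = I Λ_I β_I` -/
def nu4I : V → C := act1 M.I (M.Lam M.I M.betaI)

/-- the one-form `ν^J_4 = J Λ_J β_J` -/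
def nu4J : V → C := act1 M.J (M.Lam M.J M.betaJ)

/-- the one-form `ν^K_4 = K Λ_K β_K` -/
def nu4K : V → C := act1 M.K (M.Lam M.K M.betaK)

/-- `ν^I_3`, determined by `J Λ_J β_I = (1/(2n-1)) (ν^I_4 + (2n+1)(n-1) ν^I_3)` -/
def nu3I : V → C := fun X =>
  (1/((2*(n:ℝ)+1) * ((n:ℝ)-1))) •
    ((2*(n:ℝ)-1) • act1 M.J (M.Lam M.J M.betaI) X - M.nu4I X)

/-- `ν^J_3`, determined by `K Λ_K β_J = (1/(2n-1)) (ν^J_4 + (2n+1)(n-1) ν^J_3)` -/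
def nu3J : V → C := fun X =>
  (1/((2*(n:ℝ)+1) * ((n:ℝ)-1))) •
    ((2*(n:ℝ)-1) • act1 M.K (M.Lam M.K M.betaJ) X - M.nu4J X)

/-- `ν^K_3`, determined by `I Λ_I β_K = (1/(2n-1)) (ν^K_4 + (2n+1)(n-1) ν^K_3)` -/
def nu3K : V → C := fun X =>
  (1/((2*(n:ℝ)+1) * ((n:ℝ)-1))) •
    ((2*(n:ℝ)-1) • act1 M.I (M.Lam M.I M.betaK) X - M.nu4K X)

/-- `β^{(E)}_{3I} = -(1/2) Jν^I_3 ∧ ω_J - (1/2) Kν^I_3 ∧ ω_K + (1/(2n-1)) Iν^I_3 ∧ ω_I` -/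
def betaE3I : V → V → V → C := fun X Y Z =>
  (-(1/2:ℝ)) • wedge12 (act1 M.J M.nu3I) (M.omega M.J) X Y Z
    + (-(1/2:ℝ)) • wedge12 (act1 M.K M.nu3I) (M.omega M.K) X Y Z
    + (1/(2*(n:ℝ)-1)) • wedge12 (act1 M.I M.nu3I) (M.omega M.I) X Y Z

def betaE3J : V → V → V → C := fun X Y Z =>
  (-(1/2:ℝ)) • wedge12 (act1 M.K M.nu3J) (M.omega M.K) X Y Z
    + (-(1/2:ℝ)) • wedge12 (act1 M.I M.nu3J) (M.omega M.I) X Y Z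
    + (1/(2*(n:ℝ)-1)) • wedge12 (act1 M.J M.nu3J) (M.omega M.J) X Y Z

def betaE3K : V → V → V → C := fun X Y Z =>
  (-(1/2:ℝ)) • wedge12 (act1 M.I M.nu3K) (M.omega M.I) X Y Z
    + (-(1/2:ℝ)) • wedge12 (act1 M.J M.nu3K) (M.omega M.J) X Y Z
    + (1/(2*(n:ℝ)-1)) • wedge12 (act1 M.K M.nu3K) (M.omega M.K) X Y Z

/-- `β_{4I} = -(1/(2n-1)) Iν^I_4 ∧ ω_I` -/
def beta4I : V → V → V → C := fun X Y Z =>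
  (-(1/(2*(n:ℝ)-1))) • wedge12 (act1 M.I M.nu4I) (M.omega M.I) X Y Z

def beta4J : V → V → V → C := fun X Y Z =>
  (-(1/(2*(n:ℝ)-1))) • wedge12 (act1 M.J M.nu4J) (M.omega M.J) X Y Z

def beta4K : V → V → V → C := fun X Y Z =>
  (-(1/(2*(n:ℝ)-1))) • wedge12 (act1 M.K M.nu4K) (M.omega M.K) X Y Z

/-- `β_I^{(3+K)} = β_I - β^{(E)}_{3I} - β_{4I}` -/
def beta3KI : V → V → V → C := fun X Y Z => M.betaI X Y Z - M.betaE3I X Y Z - M.beta4I X Y Z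

def beta3KJ : V → V → V → C := fun X Y Z => M.betaJ X Y Z - M.betaE3J X Y Z - M.beta4J X Y Z

def beta3KK : V → V → V → C := fun X Y Z => M.betaK X Y Z - M.betaE3K X Y Z - M.beta4K X Y Z

/-- `β_I^{(3)} = (1/6) (2 - 𝓛_J - 𝓛_K) β_I^{(3+K)}` -/
def beta3I : V → V → V → C := fun X Y Z =>
  (1/6:ℝ) • ((2:ℝ) • M.beta3KI X Y Z - calL M.J M.beta3KI X Y Z - calL M.K M.beta3KI X Y Z)

def beta3J : V → V → V → C := fun X Y Z =>
  (1/6:ℝ) • ((2:ℝ) • M.beta3KJ X Y Z - calL M.K M.beta3KJ X Y Z - calL M.I M.beta3KJ X Y Z)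

def beta3K : V → V → V → C := fun X Y Z =>
  (1/6:ℝ) • ((2:ℝ) • M.beta3KK X Y Z - calL M.I M.beta3KK X Y Z - calL M.J M.beta3KK X Y Z)

/-- `β_I^{(K)} = (1/6) (4 + 𝓛_J + 𝓛_K) β_I^{(3+K)}` -/
def betaKI : V → V → V → C := fun X Y Z =>
  (1/6:ℝ) • ((4:ℝ) • M.beta3KI X Y Z + calL M.J M.beta3KI X Y Z + calL M.K M.beta3KI X Y Z)

def betaKJ : V → V → V → C := fun X Y Z =>
  (1/6:ℝ) • ((4:ℝ) • M.beta3KJ X Y Z + calL M.K M.beta3KJ X Y Z + calL M.I M.beta3KJ X Y Z)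

def betaKK : V → V → V → C := fun X Y Z =>
  (1/6:ℝ) • ((4:ℝ) • M.beta3KK X Y Z + calL M.I M.beta3KK X Y Z + calL M.J M.beta3KK X Y Z)

/-- the three-form `ψ^{(3)} = (1/12)(β_I^{(3)} + β_J^{(3)} + β_K^{(3)})` determining `ξ_{33}` -/
def psi3 : V → V → V → C := fun X Y Z =>
  (1/12:ℝ) • (M.beta3I X Y Z + M.beta3J X Y Z + M.beta3K X Y Z)

/-- the three-form `ψ^{(K)} = -(1/48)(β_I^{(K)} + β_J^{(K)} + β_K^{(K)})` determining `ξ_{KH}` -/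
def psiK : V → V → V → C := fun X Y Z =>
  (-(1/48:ℝ)) • (M.betaKI X Y Z + M.betaKJ X Y Z + M.betaKK X Y Z)

/-- the three-form `ψ^{(3)}_I` determining `ξ_{3H}` -/
def psi3I : V → V → V → C := fun X Y Z =>
  (-(1/8:ℝ)) • M.beta3I X Y Z
    + (1/48:ℝ) • ((3:ℝ) • (M.beta3I X Y Z + M.beta3J X Y Z + M.beta3K X Y Z)
        + calL M.I (fun a b c => M.beta3I a b c + M.beta3J a b c + M.beta3K a b c) X Y Z)

def psi3J : V → V → V → C := fun X Y Z =>
  (-(1/8:ℝ)) • M.beta3J X Y Z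
    + (1/48:ℝ) • ((3:ℝ) • (M.beta3I X Y Z + M.beta3J X Y Z + M.beta3K X Y Z)
        + calL M.J (fun a b c => M.beta3I a b c + M.beta3J a b c + M.beta3K a b c) X Y Z)

def psi3K : V → V → V → C := fun X Y Z =>
  (-(1/8:ℝ)) • M.beta3K X Y Z
    + (1/48:ℝ) • ((3:ℝ) • (M.beta3I X Y Z + M.beta3J X Y Z + M.beta3K X Y Z)
        + calL M.K (fun a b c => M.beta3I a b c + M.beta3J a b c + M.beta3K a b c) X Y Z)

/-- the three-form `ψ^{(K)}_I` determining `ξ_{K3}` -/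
def psiKI : V → V → V → C := fun X Y Z =>
  (-(1/2:ℝ)) • M.betaKI X Y Z
    + (1/6:ℝ) • (M.betaKI X Y Z + M.betaKJ X Y Z + M.betaKK X Y Z)

def psiKJ : V → V → V → C := fun X Y Z =>
  (-(1/2:ℝ)) • M.betaKJ X Y Z
    + (1/6:ℝ) • (M.betaKI X Y Z + M.betaKJ X Y Z + M.betaKK X Y Z)

def psiKK : V → V → V → C := fun X Y Z =>
  (-(1/2:ℝ)) • M.betaKK X Y Z
    + (1/6:ℝ) • (M.betaKI X Y Z + M.betaKJ X Y Z + M.betaKK X Y Z)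

/-- the one-form `θ^ξ` determining `ξ_{EH}`,
defined by `(6/n)(2n+1)(n-1) θ^ξ(X) = -⟨ξ_{e_i} e_i, X⟩` -/
def thetaXi : V → C := fun X =>
  (-((n:ℝ)/(6*(2*(n:ℝ)+1)*((n:ℝ)-1)))) • ∑ i, M.g (M.xi (M.frame i) (M.frame i)) X

/-- the local one-form `θ^ξ_I`, defined by `(2/n)(2n+1)(n-1) θ^ξ_I(X) = -⟨I ξ_{e_i} I e_i, X⟩` -/
def thetaXiI : V → C := fun X =>
  (-((n:ℝ)/(2*(2*(n:ℝ)+1)*((n:ℝ)-1)))) •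
    ∑ i, M.g (M.I (M.xi (M.frame i) (M.I (M.frame i)))) X

def thetaXiJ : V → C := fun X =>
  (-((n:ℝ)/(2*(2*(n:ℝ)+1)*((n:ℝ)-1)))) •
    ∑ i, M.g (M.J (M.xi (M.frame i) (M.J (M.frame i)))) X

def thetaXiK : V → C := fun X =>
  (-((n:ℝ)/(2*(2*(n:ℝ)+1)*((n:ℝ)-1)))) •
    ∑ i, M.g (M.K (M.xi (M.frame i) (M.K (M.frame i)))) X

/-- `α_I = -λ_I ⊗ g + (1/2)(J_(2) - J_(3)) ∇ω_K` -/
def alphaI : V → V → V → C := fun X Y Z =>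
  -(M.lambdaI X * M.g Y Z)
    + (1/2:ℝ) • (-(M.nab2 (M.omega M.K) X (M.J Y) Z) + M.nab2 (M.omega M.K) X Y (M.J Z))

def alphaJ : V → V → V → C := fun X Y Z =>
  -(M.lambdaJ X * M.g Y Z)
    + (1/2:ℝ) • (-(M.nab2 (M.omega M.I) X (M.K Y) Z) + M.nab2 (M.omega M.I) X Y (M.K Z))

def alphaK : V → V → V → C := fun X Y Z =>
  -(M.lambdaK X * M.g Y Z)
    + (1/2:ℝ) • (-(M.nab2 (M.omega M.J) X (M.I Y) Z) + M.nab2 (M.omega M.J) X Y (M.I Z))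

/-- the one-form `η_I(X) = α_I(e_i; e_i, X)` -/
def etaI : V → C := fun X => ∑ i, M.alphaI (M.frame i) (M.frame i) X

def etaJ : V → C := fun X => ∑ i, M.alphaJ (M.frame i) (M.frame i) X

def etaK : V → C := fun X => ∑ i, M.alphaK (M.frame i) (M.frame i) X

/-- the fundamental four-form `Ω = Σ_A ω_A ∧ ω_A` -/
def Omega4 : V → V → V → V → C := fun X Y Z W =>
  wedge22 (M.omega M.I) (M.omega M.I) X Y Z W
    + wedge22 (M.omega M.J) (M.omega M.J) X Y Z W
    + wedge22 (M.omega M.K) (M.omega M.K) X Y Z W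

/-- the one-form `θ^{d*Ω} = (1/3) Σ_A A Λ_A d*Ω` -/
def thetaDOmega : V → C := fun X =>
  (1/3:ℝ) • (act1 M.I (M.Lam M.I (M.codiff4 M.Omega4)) X
    + act1 M.J (M.Lam M.J (M.codiff4 M.Omega4)) X
    + act1 M.K (M.Lam M.K (M.codiff4 M.Omega4)) X)

/-- the vector-valued torsion: `g(W, T(X,Y)) = T(W,X,Y)` -/
def Tvec (T : V → V → V → C) : V → V → V := fun X Y => ∑ i, T (M.frame i) X Y • M.frame i

/-- the connection `∇ + (1/2) T` associated to a torsion (0,3)-tensor `T` -/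
def nabT (T : V → V → V → C) : V → V → V := fun X Y => M.nab X Y + (1/2:ℝ) • M.Tvec T X Y

/-- a connection is metric -/
def MetricConn (nab' : V → V → V) : Prop :=
  ∀ X Y Z, M.D X (M.g Y Z) = M.g (nab' X Y) Z + M.g Y (nab' X Z)

/-- a connection is quaternionic, with associated local one-forms `γ_I, γ_J, γ_K`:
`∇'_X I = γ_K(X) J - γ_J(X) K`, and cyclically -/
def QuatConn (nab' : V → V → V) (γI γJ γK : V → C) : Prop :=
  (∀ X Y, nab' X (M.I Y) - M.I (nab' X Y) = γK X • M.J Y - γJ X • M.K Y) ∧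
  (∀ X Y, nab' X (M.J Y) - M.J (nab' X Y) = γI X • M.K Y - γK X • M.I Y) ∧
  (∀ X Y, nab' X (M.K Y) - M.K (nab' X Y) = γJ X • M.I Y - γI X • M.J Y)

/-- the HKT condition: `I, J, K` integrable and there is a metric connection
`∇ + (1/2)T` with totally skew torsion making `I, J, K` parallel -/
def IsHKT : Prop :=
  (∀ X Y, M.nijV M.I X Y = 0) ∧ (∀ X Y, M.nijV M.J X Y = 0) ∧
  (∀ X Y, M.nijV M.K X Y = 0) ∧
  ∃ T : V → V → V → C, IsAlt3 T ∧ Lin3 T ∧ M.MetricConn (M.nabT T) ∧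
    (∀ X Y, M.nabT T X (M.I Y) = M.I (M.nabT T X Y)) ∧
    (∀ X Y, M.nabT T X (M.J Y) = M.J (M.nabT T X Y)) ∧
    (∀ X Y, M.nabT T X (M.K Y) = M.K (M.nabT T X Y))

/-- membership of a three-form in `KH`: type `{2,1}` for each `A` and `Λ_A ψ = 0` -/
def InKH3 (ψ : V → V → V → C) : Prop :=
  IsAlt3 ψ ∧ Lin3 ψ ∧
  calL M.I ψ = ψ ∧ calL M.J ψ = ψ ∧ calL M.K ψ = ψ ∧
  M.Lam M.I ψ = 0 ∧ M.Lam M.J ψ = 0 ∧ M.Lam M.K ψ = 0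

/-- the `(0,3)`-tensor of the `KH`-component of the torsion determined by `ψ^{(K)}`:
`3ψ - Σ_A A_(23) ψ` -/
def xiKH3 (ψ : V → V → V → C) : V → V → V → C := fun X Y Z =>
  (3:ℝ) • ψ X Y Z - (op23 M.I ψ X Y Z + op23 M.J ψ X Y Z + op23 M.K ψ X Y Z)

/-- the `(0,3)`-tensor of the `EH`-component of the torsion determined by the
one-form `θ`: `3 e_i ⊗ e_i ∧ θ - Σ_A (e_i ⊗ A e_i ∧ A θ + (2/n) A θ ⊗ ω_A)` -/
def xiEH3 (θ : V → C) : V → V → V → C := fun X Y Z =>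
  (3:ℝ) • ∑ i, M.g (M.frame i) X *
      (M.g (M.frame i) Y * θ Z - M.g (M.frame i) Z * θ Y)
  - ((∑ i, M.g (M.frame i) X *
        (M.g (M.I (M.frame i)) Y * act1 M.I θ Z - M.g (M.I (M.frame i)) Z * act1 M.I θ Y))
    + (∑ i, M.g (M.frame i) X *
        (M.g (M.J (M.frame i)) Y * act1 M.J θ Z - M.g (M.J (M.frame i)) Z * act1 M.J θ Y))
    + (∑ i, M.g (M.frame i) X *
        (M.g (M.K (M.frame i)) Y * act1 M.K θ Z - M.g (M.K (M.frame i)) Z * act1 M.K θ Y)))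
  - (2/(n:ℝ)) • (act1 M.I θ X * M.omega M.I Y Z + act1 M.J θ X * M.omega M.J Y Z
      + act1 M.K θ X * M.omega M.K Y Z)

/-- the intrinsic torsion lies in `(K+E)H`: it is the sum of a `KH`-tensor and an
`EH`-tensor as described in §3 of the paper -/
def inKEH : Prop :=
  ∃ (ψ : V → V → V → C) (θ : V → C), M.InKH3 ψ ∧ Lin1 θ ∧
    ∀ X Y Z, M.g Y (M.xi X Z) = M.xiKH3 ψ X Y Z + M.xiEH3 θ X Y Z

end derived

end AQH

namespace AQH

variable {n : ℕ} {C V : Type*} [CommRing C] [Algebra ℝ C] [AddCommGroup V] [Module C V]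
  [Module ℝ V] [IsScalarTower ℝ C V]

variable (M : AQH n C V)

/-- `T` is the torsion three-form of a metric quaternionic connection
`∇^QKT = ∇ + (1/2)T` with `T` a skew-symmetric three-form in `(K+E)H`,
the `+3`-eigenspace of `𝓛 = Σ_A (A_(12)+A_(13)+A_(23))`. -/
def QKTtorsion (T : V → V → V → C) : Prop :=
  IsAlt3 T ∧ Lin3 T ∧
  (∀ X Y Z, calL M.I T X Y Z + calL M.J T X Y Z + calL M.K T X Y Z = (3:ℝ) • T X Y Z) ∧
  M.MetricConn (M.nabT T) ∧
  ∃ γI γJ γK : V → C, M.QuatConn (M.nabT T) γI γJ γK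

end AQH

/-! The condition `𝓛T = 3T` forces `𝓛_A T = T` for each of `A = I, J, K`, so that the Lee form
`t = A Λ_A T` is the same for all three; both components `KH` and `EH` of the intrinsic torsion
are then carried by the single three-form `T`, through the map
`T ↦ -(1/8) (3T - Σ_A A_(23) T) - (1/4n) Σ_A At ⊗ ω_A`.

The connection `∇ + ξ` is quaternionic. Since the image of `1 + Σ_A A_(23)` commutes with
`I, J, K`, the difference `(1/2)T - ξ` with `ξ` of the above form preserves the quaternionic
bundle, so `∇ + (1/2)T` is quaternionic too. Conversely, if `∇ + (1/2)T` is quaternionic with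
one-forms `γ_A`, then `∇ω_A` is explicit in `T` and the `γ_A`, and contracting it gives
`λ_A = γ_A + (1/2n) Λ_A T`, whence `ξ`.

The derivative of `Ω` does not involve the `γ_A`, so `d*Ω = -6T - 2 Σ_A At ∧ ω_A`. The Lee form
of `d*Ω` is therefore `θ^{d*Ω} = 4(n - 1) t`, and solving for `T` gives the torsion formula and
with it uniqueness. -/

namespace AQH

section LinearForms

variable {C V : Type*} [CommRing C] [AddCommGroup V] [Module C V] {A : V → V} {ν : V → C}

lemma isLinearMap_iff_lin1 : IsLinearMap C ν ↔ Lin1 ν := by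
  refine ⟨fun h f X X' => by rw [h.map_add, h.map_smul, smul_eq_mul], fun h => ?_⟩
  have h_zero : ν 0 = 0 := by simpa only [one_smul, one_mul, add_zero, left_eq_add] using h 1 0 0
  exact ⟨fun X X' => by simpa only [one_smul, one_mul] using h 1 X X',
    fun f X => by simpa only [add_zero, h_zero, smul_eq_mul] using h f X 0⟩

lemma isLinearMap_comp (hν : IsLinearMap C ν) (hA : IsLinearMap C A) :
    IsLinearMap C fun X => ν (A X) :=
  (hν.mk' ν ∘ₗ hA.mk' A).isLinear

lemma isLinearMap_neg (hν : IsLinearMap C ν) : IsLinearMap C fun X => -ν X :=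
  (-hν.mk' ν).isLinear

lemma isLinearMap_act1 (hν : IsLinearMap C ν) (hA : IsLinearMap C A) :
    IsLinearMap C (act1 A ν) :=
  isLinearMap_neg (isLinearMap_comp hν hA)

end LinearForms

section Metric

variable {n : ℕ} {C V : Type*} [CommRing C] [Algebra ℝ C] [AddCommGroup V] [Module C V]

lemma isLinearMap_g_left (M : AQH n C V) (Y : V) : IsLinearMap C fun X => M.g X Y :=
  ⟨fun X X' => M.g_add X X' Y, fun f X => M.g_smul f X Y⟩

lemma isLinearMap_g (M : AQH n C V) (X : V) : IsLinearMap C (M.g X) := by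
  simpa only [M.g_symm _ X] using M.isLinearMap_g_left X

lemma g_neg_left (M : AQH n C V) (X Y : V) : M.g (-X) Y = -M.g X Y :=
  (M.isLinearMap_g_left Y).map_neg X

lemma g_neg_right (M : AQH n C V) (X Y : V) : M.g X (-Y) = -M.g X Y :=
  (M.isLinearMap_g X).map_neg Y

lemma g_add_right (M : AQH n C V) (X Y Z : V) : M.g X (Y + Z) = M.g X Y + M.g X Z :=
  (M.isLinearMap_g X).map_add Y Z

lemma g_sub_right (M : AQH n C V) (X Y Z : V) : M.g X (Y - Z) = M.g X Y - M.g X Z :=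
  (M.isLinearMap_g X).map_sub Y Z

lemma g_smul_right (M : AQH n C V) (f : C) (X Y : V) : M.g X (f • Y) = f * M.g X Y :=
  (M.isLinearMap_g X).map_smul f Y

lemma g_left_ext (M : AQH n C V) {X Y : V} (h : ∀ Z, M.g X Z = M.g Y Z) : X = Y := by
  rw [M.frame_span X, M.frame_span Y]
  simp only [h]

lemma g_right_ext (M : AQH n C V) {X Y : V} (h : ∀ Z, M.g Z X = M.g Z Y) : X = Y :=
  M.g_left_ext fun Z => by rw [M.g_symm X, M.g_symm Y, h]

lemma sum_mul_g_frame (M : AQH n C V) {ν : V → C} (hν : IsLinearMap C ν) (X : V) :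
    ∑ i, ν (M.frame i) * M.g (M.frame i) X = ν X := by
  conv_rhs => rw [M.frame_span X, ← hν.mk'_apply, map_sum]
  exact Finset.sum_congr rfl fun i _ => by
    rw [hν.mk'_apply, hν.map_smul, smul_eq_mul, M.g_symm X, mul_comm]

/-- Skew-adjointness of an endomorphism with respect to the metric; equivalently, `ω_A` is a
two-form. -/
def IsSkew (M : AQH n C V) (A : V → V) : Prop := ∀ X Y, M.g (A X) Y = -M.g X (A Y)

variable {M : AQH n C V} {A B : V → V}

lemma IsSkew.isLinearMap (hA : M.IsSkew A) : IsLinearMap C A where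
  map_add X Y := M.g_left_ext fun Z => by simp only [hA _ Z, M.g_add]; ring
  map_smul f X := M.g_left_ext fun Z => by simp only [hA _ Z, M.g_smul]; ring

lemma IsSkew.omega_swap (hA : M.IsSkew A) (X Y : V) : M.omega A Y X = -M.omega A X Y := by
  rw [omega, omega, M.g_symm, hA]

lemma IsSkew.g_apply_self (hA : M.IsSkew A) (X : V) : M.g X (A X) = 0 := by
  have h : M.g X (A X) = -M.g X (A X) := hA.omega_swap X X
  linear_combination (norm := algebra) (1 / 2 : ℝ) • h

lemma IsSkew.sum_apply_left (hA : M.IsSkew A) {b : V → V → C}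
    (hl : ∀ Y, IsLinearMap C fun X => b X Y) (hr : ∀ X, IsLinearMap C (b X)) :
    ∑ i, b (A (M.frame i)) (M.frame i) = -∑ i, b (M.frame i) (A (M.frame i)) := by
  have expand_left (i) : b (A (M.frame i)) (M.frame i)
      = ∑ k, b (M.frame k) (M.frame i) * M.g (M.frame k) (A (M.frame i)) :=
    (M.sum_mul_g_frame (hl (M.frame i)) (A (M.frame i))).symm
  have expand_right (i) : b (M.frame i) (A (M.frame i))
      = ∑ k, b (M.frame i) (M.frame k) * M.g (M.frame k) (A (M.frame i)) :=
    (M.sum_mul_g_frame (hr (M.frame i)) (A (M.frame i))).symm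
  simp only [expand_left, expand_right, ← Finset.sum_neg_distrib]
  rw [Finset.sum_comm]
  refine Finset.sum_congr rfl fun i _ => Finset.sum_congr rfl fun k _ => ?_
  rw [M.g_symm (M.frame k) (A _), hA, mul_neg, neg_neg]

lemma IsSkew.sum_apply_apply (hA : M.IsSkew A) (hsq : ∀ X, A (A X) = -X) {b : V → V → C}
    (hl : ∀ Y, IsLinearMap C fun X => b X Y) (hr : ∀ X, IsLinearMap C (b X)) :
    ∑ i, b (A (M.frame i)) (A (M.frame i)) = ∑ i, b (M.frame i) (M.frame i) := by
  rw [hA.sum_apply_left (b := fun X Y => b X (A Y)) (fun Y => hl (A Y))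
    fun X => isLinearMap_comp (hr X) hA.isLinearMap]
  simp only [hsq, (hr _).map_neg, Finset.sum_neg_distrib, neg_neg]

lemma inner2_omega (M : AQH n C V) (A : V → V) {β : V → V → C}
    (hβ : ∀ Y, IsLinearMap C fun X => β X Y) :
    M.inner2 β (M.omega A) = (1 / 2 : ℝ) • ∑ i, β (A (M.frame i)) (M.frame i) := by
  rw [inner2, Finset.sum_comm]
  congr 1
  exact Finset.sum_congr rfl fun j _ => M.sum_mul_g_frame (hβ _) _

lemma IsSkew.inner2_omega_omega (hA : M.IsSkew A) (B : V → V) :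
    M.inner2 (M.omega B) (M.omega A) = -(1 / 2 : ℝ) • ∑ i, M.g (M.frame i) (A (B (M.frame i))) := by
  rw [M.inner2_omega (β := M.omega B) A fun Y => M.isLinearMap_g_left (B Y)]
  simp only [omega, hA _ (B _), Finset.sum_neg_distrib, smul_neg, neg_smul]

end Metric

section Quaternions

variable {n : ℕ} {C V : Type*} [CommRing C] [Algebra ℝ C] [AddCommGroup V] [Module C V]
  (M : AQH n C V)

lemma isSkew_I : M.IsSkew M.I := fun X Y => by
  rw [← M.I_metric (M.I X), M.I_sq, M.g_neg_left]

lemma isSkew_J : M.IsSkew M.J := fun X Y => by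
  rw [← M.J_metric (M.J X), M.J_sq, M.g_neg_left]

lemma J_I_apply (X : V) : M.J (M.I X) = -M.K X := by rw [M.K_def, M.anticomm, neg_neg]

lemma isSkew_K : M.IsSkew M.K := fun X Y => by
  rw [M.K_def, M.isSkew_I, M.isSkew_J, M.J_I_apply, M.g_neg_right, neg_neg]

lemma I_neg (X : V) : M.I (-X) = -M.I X := M.isSkew_I.isLinearMap.map_neg X

lemma J_neg (X : V) : M.J (-X) = -M.J X := M.isSkew_J.isLinearMap.map_neg X

lemma K_neg (X : V) : M.K (-X) = -M.K X := M.isSkew_K.isLinearMap.map_neg X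

lemma I_J_apply (X : V) : M.I (M.J X) = M.K X := (M.K_def X).symm

lemma I_K_apply (X : V) : M.I (M.K X) = -M.J X := by rw [M.K_def, M.I_sq]

lemma J_K_apply (X : V) : M.J (M.K X) = M.I X := by
  rw [M.K_def, M.anticomm, M.J_neg, M.J_sq, neg_neg]

lemma K_I_apply (X : V) : M.K (M.I X) = M.J X := by
  rw [M.K_def, M.J_I_apply, M.I_neg, M.I_K_apply, neg_neg]

lemma K_J_apply (X : V) : M.K (M.J X) = -M.I X := by rw [M.K_def, M.J_sq, M.I_neg]

lemma K_sq (X : V) : M.K (M.K X) = -X := by rw [M.K_def (M.K X), M.J_K_apply, M.I_sq]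

/-- The same almost quaternion-Hermitian structure with the adapted basis `(I, J, K)` replaced by
`(J, K, I)`. Statements proved for the first almost complex structure are transferred to the
other two by this cyclic symmetry. -/
def rotate : AQH n C V :=
  { M with
    I := M.J
    J := M.K
    K := M.I
    I_lin := M.J_lin
    J_lin := M.K_lin
    K_lin := M.I_lin
    I_sq := M.J_sq
    J_sq := M.K_sq
    K_def := fun X => (M.J_K_apply X).symm
    anticomm := fun X => by rw [M.J_K_apply, M.K_J_apply, neg_neg]
    I_metric := M.J_metric
    J_metric := fun X Y => by rw [M.isSkew_K, M.K_sq, M.g_neg_right, neg_neg] }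

lemma inner2_omega_I_J : M.inner2 (M.omega M.I) (M.omega M.J) = 0 := by
  simp only [M.isSkew_J.inner2_omega_omega, M.J_I_apply, M.g_neg_right, M.isSkew_K.g_apply_self,
    neg_zero, Finset.sum_const_zero, smul_zero]

lemma inner2_omega_J_I : M.inner2 (M.omega M.J) (M.omega M.I) = 0 := by
  simp only [M.isSkew_I.inner2_omega_omega, M.I_J_apply, M.isSkew_K.g_apply_self,
    Finset.sum_const_zero, smul_zero]

lemma inner2_omega_I_self : M.inner2 (M.omega M.I) (M.omega M.I) = (2 * n : ℝ) • (1 : C) := by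
  simp only [M.isSkew_I.inner2_omega_omega, M.I_sq, M.g_neg_right, M.frame_orthonormal, if_true,
    Finset.sum_const, Finset.card_univ, Fintype.card_fin, ← Nat.cast_smul_eq_nsmul ℝ]
  push_cast
  module

end Quaternions

section CyclicOperator

variable {C V : Type*} [CommRing C]

lemma calL_add (A : V → V) (T S : V → V → V → C) : calL A (T + S) = calL A T + calL A S := by
  funext X Y Z
  simp only [calL, op12, op13, op23, Pi.add_apply]
  ring

lemma calL_smul [Algebra ℝ C] (A : V → V) (r : ℝ) (T : V → V → V → C) :
    calL A (r • T) = r • calL A T := by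
  funext X Y Z
  simp only [calL, op12, op13, op23, Pi.smul_apply, smul_add]

end CyclicOperator

section ThreeForms

variable {C V : Type*} [CommRing C] [AddCommGroup V] [Module C V]

/-- A `C`-trilinear alternating form on `V`; `alt` and `lin` together give linearity in all three
arguments. -/
structure IsThreeForm (T : V → V → V → C) : Prop where
  alt : IsAlt3 T
  lin : Lin3 T

namespace IsThreeForm

variable {T S : V → V → V → C}

lemma swap₁₂ (hT : IsThreeForm T) (X Y Z : V) : T Y X Z = -T X Y Z := hT.alt.1 X Y Z

lemma swap₂₃ (hT : IsThreeForm T) (X Y Z : V) : T X Z Y = -T X Y Z := hT.alt.2 X Y Z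

lemma isLinearMap₁ (hT : IsThreeForm T) (Y Z : V) : IsLinearMap C fun X => T X Y Z :=
  isLinearMap_iff_lin1.2 fun f X X' => hT.lin f X X' Y Z

lemma isLinearMap₂ (hT : IsThreeForm T) (X Z : V) : IsLinearMap C fun Y => T X Y Z := by
  simpa only [← hT.swap₁₂ _ X Z] using isLinearMap_neg (hT.isLinearMap₁ X Z)

lemma isLinearMap₃ (hT : IsThreeForm T) (X Y : V) : IsLinearMap C (T X Y) := by
  simpa only [← hT.swap₂₃ X _ Y] using isLinearMap_neg (hT.isLinearMap₂ X Y)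

lemma neg₁ (hT : IsThreeForm T) (X Y Z : V) : T (-X) Y Z = -T X Y Z :=
  (hT.isLinearMap₁ Y Z).map_neg X

lemma neg₂ (hT : IsThreeForm T) (X Y Z : V) : T X (-Y) Z = -T X Y Z :=
  (hT.isLinearMap₂ X Z).map_neg Y

lemma neg₃ (hT : IsThreeForm T) (X Y Z : V) : T X Y (-Z) = -T X Y Z :=
  (hT.isLinearMap₃ X Y).map_neg Z

lemma apply_self [Algebra ℝ C] (hT : IsThreeForm T) (X Y : V) : T X X Y = 0 := by
  have h : T X X Y = -T X X Y := hT.swap₁₂ X X Y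
  linear_combination (norm := algebra) (1 / 2 : ℝ) • h

lemma add (hT : IsThreeForm T) (hS : IsThreeForm S) : IsThreeForm (T + S) where
  alt := ⟨fun X Y Z => by simp only [Pi.add_apply, hT.swap₁₂ X, hS.swap₁₂ X]; ring,
    fun X Y Z => by simp only [Pi.add_apply, hT.swap₂₃ X Y, hS.swap₂₃ X Y]; ring⟩
  lin f X X' Y Z := by simp only [Pi.add_apply, hT.lin f X, hS.lin f X]; ring

lemma smul [Algebra ℝ C] (hT : IsThreeForm T) (r : ℝ) : IsThreeForm (r • T) where
  alt := ⟨fun X Y Z => by simp only [Pi.smul_apply, hT.swap₁₂ X, smul_neg],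
    fun X Y Z => by simp only [Pi.smul_apply, hT.swap₂₃ X Y, smul_neg]⟩
  lin f X X' Y Z := by simp only [Pi.smul_apply, hT.lin f X, smul_add, mul_smul_comm]

end IsThreeForm

end ThreeForms

section Contraction

variable {n : ℕ} {C V : Type*} [CommRing C] [Algebra ℝ C] [AddCommGroup V] [Module C V]

lemma Lam_add (M : AQH n C V) (A : V → V) (T S : V → V → V → C) :
    M.Lam A (T + S) = M.Lam A T + M.Lam A S := by
  funext X
  simp only [Lam, Pi.add_apply, add_mul, Finset.sum_add_distrib, smul_add]

lemma Lam_smul (M : AQH n C V) (A : V → V) (r : ℝ) (T : V → V → V → C) :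
    M.Lam A (r • T) = r • M.Lam A T := by
  funext X
  simp only [Lam, Pi.smul_apply, smul_mul_assoc, ← Finset.smul_sum, smul_comm r]

variable {M : AQH n C V} {A B : V → V} {T : V → V → V → C}

lemma IsThreeForm.Lam_apply (hT : IsThreeForm T) (M : AQH n C V) (A : V → V) (X : V) :
    M.Lam A T X = (1 / 2 : ℝ) • ∑ i, T X (A (M.frame i)) (M.frame i) :=
  M.inner2_omega A (hT.isLinearMap₂ X)

lemma IsThreeForm.isLinearMap_Lam (hT : IsThreeForm T) (M : AQH n C V) (A : V → V) :
    IsLinearMap C (M.Lam A T) where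
  map_add X X' := by
    simp only [hT.Lam_apply, (hT.isLinearMap₁ _ _).map_add, Finset.sum_add_distrib, smul_add]
  map_smul f X := by
    simp only [hT.Lam_apply, (hT.isLinearMap₁ _ _).map_smul, ← Finset.smul_sum, smul_comm f]

lemma IsSkew.isThreeForm_wedge12 (hA : M.IsSkew A) {ν : V → C} (hν : IsLinearMap C ν) :
    IsThreeForm (wedge12 ν (M.omega A)) where
  alt := ⟨fun X Y Z => by simp only [wedge12, hA.omega_swap X Y]; ring,
    fun X Y Z => by simp only [wedge12, hA.omega_swap Y Z]; ring⟩
  lin f X X' Y Z := by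
    simp only [wedge12, omega, hν.map_add, hν.map_smul, M.g_add, M.g_smul, smul_eq_mul]
    ring

lemma IsSkew.Lam_wedge12 (hA : M.IsSkew A) (hB : M.IsSkew B) {ν : V → C}
    (hν : IsLinearMap C ν) (X : V) :
    M.Lam A (wedge12 ν (M.omega B)) X
      = ν X * M.inner2 (M.omega B) (M.omega A) + ν (A (B X)) := by
  have contract_outer : ∑ i, ν (M.frame i) * M.g (M.frame i) (A (B X)) = ν (A (B X)) :=
    M.sum_mul_g_frame hν (A (B X))
  have contract_inner : ∑ i, ν (A (M.frame i)) * M.g (M.frame i) (B X) = ν (A (B X)) :=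
    M.sum_mul_g_frame (isLinearMap_comp hν hA.isLinearMap) (B X)
  have expand (i) : wedge12 ν (M.omega B) X (A (M.frame i)) (M.frame i)
      = ν X * M.omega B (A (M.frame i)) (M.frame i) + ν (A (M.frame i)) * M.g (M.frame i) (B X)
        + ν (M.frame i) * M.g (M.frame i) (A (B X)) := by
    have h₁ : M.g X (B (M.frame i)) = -M.g (M.frame i) (B X) := hB.omega_swap _ _
    have h₂ : M.g X (B (A (M.frame i))) = M.g (M.frame i) (A (B X)) := by
      rw [M.g_symm, hB, hA, neg_neg, M.g_symm]
    simp only [wedge12, omega, h₁, h₂]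
    ring
  rw [(hB.isThreeForm_wedge12 hν).Lam_apply,
    M.inner2_omega (β := M.omega B) A fun Y => M.isLinearMap_g_left (B Y)]
  simp only [expand, Finset.sum_add_distrib, ← Finset.mul_sum, contract_outer, contract_inner,
    smul_add, mul_smul_comm]
  module

end Contraction

section KEForms

variable {n : ℕ} {C V : Type*} [CommRing C] [Algebra ℝ C] [AddCommGroup V] [Module C V]
  {M : AQH n C V} {T S : V → V → V → C} {θ : V → C}

/-- Membership of a three-form in `(K + E)H`, expressed as invariance under each of the three
operators `𝓛_A = A_(12) + A_(13) + A_(23)` separately. -/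
structure IsKEForm (M : AQH n C V) (T : V → V → V → C) : Prop extends IsThreeForm T where
  calL_I : calL M.I T = T
  calL_J : calL M.J T = T
  calL_K : calL M.K T = T

lemma IsThreeForm.calL_I_eq_self (hT : IsThreeForm T)
    (hL : ∀ X Y Z, calL M.I T X Y Z + calL M.J T X Y Z + calL M.K T X Y Z = (3 : ℝ) • T X Y Z) :
    calL M.I T = T := by
  funext X Y Z
  have h := hL X Y Z
  have h₂₃ := hL X (M.I Y) (M.I Z)
  have h₁₃ := hL (M.I X) Y (M.I Z)
  have h₁₂ := hL (M.I X) (M.I Y) Z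
  simp only [calL, op12, op13, op23, M.I_sq, M.J_I_apply, M.K_I_apply, hT.neg₁, hT.neg₂,
    hT.neg₃] at *
  linear_combination (norm := algebra) (1 / 6 : ℝ) • (h - h₁₂ - h₁₃ - h₂₃)

/-- On the `+3`-eigenspace of `𝓛` each `𝓛_A` attains its largest eigenvalue `1`. -/
lemma IsThreeForm.isKEForm (hT : IsThreeForm T)
    (hL : ∀ X Y Z, calL M.I T X Y Z + calL M.J T X Y Z + calL M.K T X Y Z = (3 : ℝ) • T X Y Z) :
    M.IsKEForm T where
  toIsThreeForm := hT
  calL_I := hT.calL_I_eq_self hL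
  calL_J := hT.calL_I_eq_self (M := M.rotate) fun X Y Z => (add_rotate _ _ _).symm.trans (hL X Y Z)
  calL_K := hT.calL_I_eq_self (M := M.rotate.rotate) fun X Y Z =>
    (add_rotate _ _ _).trans (hL X Y Z)

namespace IsKEForm

lemma rotate (hT : M.IsKEForm T) : M.rotate.IsKEForm T :=
  { hT with calL_I := hT.calL_J, calL_J := hT.calL_K, calL_K := hT.calL_I }

lemma add (hT : M.IsKEForm T) (hS : M.IsKEForm S) : M.IsKEForm (T + S) where
  toIsThreeForm := hT.toIsThreeForm.add hS.toIsThreeForm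
  calL_I := by rw [calL_add, hT.calL_I, hS.calL_I]
  calL_J := by rw [calL_add, hT.calL_J, hS.calL_J]
  calL_K := by rw [calL_add, hT.calL_K, hS.calL_K]

lemma smul (hT : M.IsKEForm T) (r : ℝ) : M.IsKEForm (r • T) where
  toIsThreeForm := hT.toIsThreeForm.smul r
  calL_I := by rw [calL_smul, hT.calL_I]
  calL_J := by rw [calL_smul, hT.calL_J]
  calL_K := by rw [calL_smul, hT.calL_K]

/-- Contract `𝓛_J T = T` with `ω_I`. -/
lemma Lam_I_apply (hT : M.IsKEForm T) (X : V) : M.Lam M.I T X = -M.Lam M.K T (M.J X) := by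
  have trace_J {b : V → V → C} (hl : ∀ Y, IsLinearMap C fun X => b X Y)
      (hr : ∀ X, IsLinearMap C (b X)) :=
    M.isSkew_J.sum_apply_apply M.J_sq hl hr
  have trace_K : ∑ i, T (M.J X) (M.I (M.frame i)) (M.J (M.frame i))
      = -∑ i, T (M.J X) (M.K (M.frame i)) (M.frame i) := by
    have h := trace_J (b := fun Y Z => T (M.J X) (M.K Y) Z)
      (fun Z => isLinearMap_comp (hT.isLinearMap₂ _ Z) M.isSkew_K.isLinearMap)
      (fun Y => hT.isLinearMap₃ _ _)
    simp only [M.K_J_apply, hT.neg₂, Finset.sum_neg_distrib] at h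
    linear_combination -h
  have trace_I : ∑ i, T X (M.K (M.frame i)) (M.J (M.frame i))
      = ∑ i, T X (M.I (M.frame i)) (M.frame i) := by
    simpa only [M.I_J_apply] using trace_J (b := fun Y Z => T X (M.I Y) Z)
      (fun Z => isLinearMap_comp (hT.isLinearMap₂ _ Z) M.isSkew_I.isLinearMap)
      (fun Y => hT.isLinearMap₃ _ _)
  have contracted : ∑ i, calL M.J T X (M.I (M.frame i)) (M.frame i)
      = ∑ i, T X (M.I (M.frame i)) (M.frame i) := by rw [hT.calL_J]
  simp only [calL, op12, op13, op23, M.J_I_apply, hT.neg₂, Finset.sum_add_distrib,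
    Finset.sum_neg_distrib, trace_K, trace_I] at contracted
  rw [hT.Lam_apply, hT.Lam_apply]
  linear_combination (norm := algebra) (-1 / 4 : ℝ) • contracted

end IsKEForm

/-- The Lee form `t = I Λ_I T` of a three-form. On `(K + E)H` it does not depend on the choice of
`I` in the adapted basis. -/
def leeForm (M : AQH n C V) (T : V → V → V → C) : V → C := act1 M.I (M.Lam M.I T)

lemma leeForm_add : M.leeForm (T + S) = M.leeForm T + M.leeForm S := by
  funext X
  simp only [leeForm, act1, Lam_add, Pi.add_apply, neg_add]

lemma leeForm_smul (r : ℝ) : M.leeForm (r • T) = r • M.leeForm T := by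
  funext X
  simp only [leeForm, act1, Lam_smul, Pi.smul_apply, smul_neg]

lemma IsThreeForm.isLinearMap_leeForm (hT : IsThreeForm T) (M : AQH n C V) :
    IsLinearMap C (M.leeForm T) :=
  isLinearMap_act1 (hT.isLinearMap_Lam M M.I) M.isSkew_I.isLinearMap

lemma IsThreeForm.Lam_I_eq (hT : IsThreeForm T) : M.Lam M.I T = -act1 M.I (M.leeForm T) := by
  funext X
  simp only [leeForm, act1, M.I_sq, (hT.isLinearMap_Lam M M.I).map_neg, Pi.neg_apply, neg_neg]

namespace IsKEForm

lemma act1_K_Lam_K (hT : M.IsKEForm T) : act1 M.K (M.Lam M.K T) = M.leeForm T := by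
  funext X
  simp only [leeForm, act1, hT.Lam_I_apply, M.J_I_apply, (hT.isLinearMap_Lam M M.K).map_neg,
    neg_neg]

lemma leeForm_rotate (hT : M.IsKEForm T) : M.rotate.leeForm T = M.leeForm T :=
  hT.rotate.act1_K_Lam_K.symm

lemma act1_J_Lam_J (hT : M.IsKEForm T) : act1 M.J (M.Lam M.J T) = M.leeForm T := hT.leeForm_rotate

lemma Lam_J_eq (hT : M.IsKEForm T) : M.Lam M.J T = -act1 M.J (M.leeForm T) := by
  rw [← hT.leeForm_rotate]
  exact hT.Lam_I_eq (M := M.rotate)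

lemma Lam_K_eq (hT : M.IsKEForm T) : M.Lam M.K T = -act1 M.K (M.leeForm T) := by
  rw [← hT.leeForm_rotate]
  exact hT.rotate.Lam_J_eq

end IsKEForm

/-- The three-form `Σ_A Aθ ∧ ω_A`, spanning the component `EH` of `Λ³T*M` as `θ` varies. -/
def wedgeKahler (M : AQH n C V) (θ : V → C) : V → V → V → C :=
  wedge12 (act1 M.I θ) (M.omega M.I) + wedge12 (act1 M.J θ) (M.omega M.J)
    + wedge12 (act1 M.K θ) (M.omega M.K)

/-- The tensor `Σ_A Aθ ⊗ ω_A`. -/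
def tensorKahler (M : AQH n C V) (θ : V → C) : V → V → V → C := fun X Y Z =>
  act1 M.I θ X * M.omega M.I Y Z + act1 M.J θ X * M.omega M.J Y Z
    + act1 M.K θ X * M.omega M.K Y Z

lemma wedgeKahler_rotate : M.rotate.wedgeKahler θ = M.wedgeKahler θ := (add_rotate _ _ _).symm

lemma tensorKahler_rotate : M.rotate.tensorKahler θ = M.tensorKahler θ := by
  funext X Y Z
  exact (add_rotate _ _ _).symm

lemma wedgeKahler_smul (r : ℝ) : M.wedgeKahler (r • θ) = r • M.wedgeKahler θ := by
  funext X Y Z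
  simp only [wedgeKahler, wedge12, act1, Pi.add_apply, Pi.smul_apply]
  algebra

lemma tensorKahler_smul (r : ℝ) : M.tensorKahler (r • θ) = r • M.tensorKahler θ := by
  funext X Y Z
  simp only [tensorKahler, act1, Pi.smul_apply]
  algebra

lemma isThreeForm_wedgeKahler (hθ : IsLinearMap C θ) : IsThreeForm (M.wedgeKahler θ) :=
  have of_skew {A : V → V} (hA : M.IsSkew A) : IsThreeForm (wedge12 (act1 A θ) (M.omega A)) :=
    hA.isThreeForm_wedge12 (isLinearMap_act1 hθ hA.isLinearMap)
  ((of_skew M.isSkew_I).add (of_skew M.isSkew_J)).add (of_skew M.isSkew_K)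

lemma calL_I_wedgeKahler (hθ : IsLinearMap C θ) :
    calL M.I (M.wedgeKahler θ) = M.wedgeKahler θ := by
  funext X Y Z
  simp only [calL, op12, op13, op23, wedgeKahler, wedge12, act1, omega, Pi.add_apply, M.I_sq,
    M.J_I_apply, M.K_I_apply, M.I_J_apply, M.I_K_apply, M.I_neg, M.isSkew_I _ _,
    hθ.map_neg, M.g_neg_right]
  ring

lemma isKEForm_wedgeKahler (hθ : IsLinearMap C θ) : M.IsKEForm (M.wedgeKahler θ) where
  toIsThreeForm := isThreeForm_wedgeKahler hθ
  calL_I := calL_I_wedgeKahler hθ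
  calL_J := by
    rw [← wedgeKahler_rotate]
    exact calL_I_wedgeKahler (M := M.rotate) hθ
  calL_K := by
    rw [← wedgeKahler_rotate, ← wedgeKahler_rotate]
    exact calL_I_wedgeKahler (M := M.rotate.rotate) hθ

lemma Lam_I_wedgeKahler (hθ : IsLinearMap C θ) :
    M.Lam M.I (M.wedgeKahler θ) = (2 * n + 1 : ℝ) • act1 M.I θ := by
  funext X
  have Lam_term {A : V → V} (hA : M.IsSkew A) :=
    M.isSkew_I.Lam_wedge12 hA (isLinearMap_act1 hθ hA.isLinearMap) X
  have inner2_K_I : M.inner2 (M.omega M.K) (M.omega M.I) = 0 := M.rotate.rotate.inner2_omega_I_J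
  simp only [wedgeKahler, Lam_add, Pi.add_apply, Pi.smul_apply, Lam_term M.isSkew_I,
    Lam_term M.isSkew_J, Lam_term M.isSkew_K, M.inner2_omega_I_self, M.inner2_omega_J_I, inner2_K_I]
  simp only [act1, M.I_sq, M.I_J_apply, M.I_K_apply, M.J_K_apply, M.K_J_apply,
    M.I_neg, M.K_neg, hθ.map_neg]
  algebra

lemma leeForm_wedgeKahler (hθ : IsLinearMap C θ) :
    M.leeForm (M.wedgeKahler θ) = (-(2 * n + 1) : ℝ) • θ := by
  funext X
  simp only [leeForm, Lam_I_wedgeKahler hθ, act1, Pi.smul_apply, M.I_sq, hθ.map_neg]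
  module

end KEForms

section KEHTensors

variable {n : ℕ} {C V : Type*} [CommRing C] [Algebra ℝ C] [AddCommGroup V] [Module C V]
  {M : AQH n C V} {T S : V → V → V → C} {θ : V → C}

lemma xiKH3_add : M.xiKH3 (T + S) = M.xiKH3 T + M.xiKH3 S := by
  funext X Y Z
  simp only [xiKH3, op23, Pi.add_apply]
  module

lemma xiKH3_smul (r : ℝ) : M.xiKH3 (r • T) = r • M.xiKH3 T := by
  funext X Y Z
  simp only [xiKH3, op23, Pi.smul_apply]
  module

lemma xiKH3_wedgeKahler (hθ : IsLinearMap C θ) (X Y Z : V) :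
    M.xiKH3 (M.wedgeKahler θ) X Y Z
      = (3 : ℝ) • (M.g X Y * θ Z - M.g X Z * θ Y)
        + (M.omega M.I X Y * act1 M.I θ Z - M.omega M.I X Z * act1 M.I θ Y)
        + (M.omega M.J X Y * act1 M.J θ Z - M.omega M.J X Z * act1 M.J θ Y)
        + (M.omega M.K X Y * act1 M.K θ Z - M.omega M.K X Z * act1 M.K θ Y)
        + (4 : ℝ) • M.tensorKahler θ X Y Z := by
  simp only [xiKH3, op23, wedgeKahler, tensorKahler, wedge12, act1, omega, Pi.add_apply,
    M.I_sq, M.J_sq, M.K_sq, M.I_J_apply, M.I_K_apply, M.J_I_apply, M.J_K_apply, M.K_I_apply,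
    M.K_J_apply, M.isSkew_I _ _, M.isSkew_J _ _, M.isSkew_K _ _, M.I_neg, M.J_neg, M.K_neg,
    hθ.map_neg, M.g_neg_right]
  algebra

lemma IsSkew.sum_g_frame_mul {A : V → V} (hA : M.IsSkew A) (s t : C) (X Y Z : V) :
    ∑ i, M.g (M.frame i) X * (M.g (A (M.frame i)) Y * s - M.g (A (M.frame i)) Z * t)
      = M.omega A X Z * t - M.omega A X Y * s := by
  have h_linear : IsLinearMap C fun W => M.omega A W Z * t - M.omega A W Y * s :=
    ⟨fun W W' => by simp only [omega, M.g_add]; ring,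
      fun f W => by simp only [omega, M.g_smul, smul_eq_mul]; ring⟩
  rw [← M.sum_mul_g_frame h_linear X]
  exact Finset.sum_congr rfl fun i _ => by simp only [hA _ Y, hA _ Z, omega]; ring

lemma sum_g_frame_mul (M : AQH n C V) (s t : C) (X Y Z : V) :
    ∑ i, M.g (M.frame i) X * (M.g (M.frame i) Y * s - M.g (M.frame i) Z * t)
      = M.g X Y * s - M.g X Z * t := by
  have h_linear : IsLinearMap C fun W => M.g W Y * s - M.g W Z * t :=
    ⟨fun W W' => by simp only [M.g_add]; ring,
      fun f W => by simp only [M.g_smul, smul_eq_mul]; ring⟩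
  rw [← M.sum_mul_g_frame h_linear X]
  exact Finset.sum_congr rfl fun i _ => mul_comm _ _

lemma xiEH3_eq (hθ : IsLinearMap C θ) :
    M.xiEH3 θ = M.xiKH3 (M.wedgeKahler θ) - (4 + 2 / n : ℝ) • M.tensorKahler θ := by
  funext X Y Z
  simp only [xiEH3, Pi.sub_apply, Pi.smul_apply, xiKH3_wedgeKahler hθ, tensorKahler,
    M.isSkew_I.sum_g_frame_mul, M.isSkew_J.sum_g_frame_mul, M.isSkew_K.sum_g_frame_mul,
    M.sum_g_frame_mul]
  module

lemma inKH3_iff : M.InKH3 T ↔ M.IsKEForm T ∧ M.leeForm T = 0 := by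
  refine ⟨fun ⟨alt, lin, hI, hJ, hK, Lam_I, _⟩ => ⟨⟨⟨alt, lin⟩, hI, hJ, hK⟩, ?_⟩,
    fun ⟨hT, lee_zero⟩ => ?_⟩
  · funext X
    simp only [leeForm, act1, Lam_I, Pi.zero_apply, neg_zero]
  · have act1_zero (A : V → V) : act1 A (0 : V → C) = 0 := by
      funext X
      simp only [act1, Pi.zero_apply, neg_zero]
    exact ⟨hT.alt, hT.lin, hT.calL_I, hT.calL_J, hT.calL_K,
      by rw [hT.Lam_I_eq, lee_zero, act1_zero, neg_zero],
      by rw [hT.Lam_J_eq, lee_zero, act1_zero, neg_zero],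
      by rw [hT.Lam_K_eq, lee_zero, act1_zero, neg_zero]⟩

/-- The tensor `-(1/8)(3T - Σ_A A_(23) T) - (1/4n) Σ_A At ⊗ ω_A` with `t` the Lee form of `T`,
which is the intrinsic torsion of the structure when `T` is the torsion of `∇^QKT`. -/
def intrinsicTorsionOf (M : AQH n C V) (T : V → V → V → C) : V → V → V → C :=
  (-(1 / 8) : ℝ) • M.xiKH3 T - (1 / (4 * n) : ℝ) • M.tensorKahler (M.leeForm T)

lemma intrinsicTorsionOf_add_wedgeKahler (hn : n ≠ 0) (hT : M.leeForm T = 0)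
    (hθ : IsLinearMap C θ) :
    M.intrinsicTorsionOf ((-8 : ℝ) • (T + M.wedgeKahler θ)) = M.xiKH3 T + M.xiEH3 θ := by
  have hn' : (n : ℝ) ≠ 0 := Nat.cast_ne_zero.2 hn
  rw [intrinsicTorsionOf, leeForm_smul, leeForm_add, hT, zero_add, leeForm_wedgeKahler hθ,
    tensorKahler_smul, tensorKahler_smul, xiKH3_smul, xiKH3_add, xiEH3_eq hθ]
  match_scalars <;> field_simp
  ring

/-- The `EH`-component is read off from the Lee form. -/
lemma IsKEForm.exists_eq_add_wedgeKahler (hS : M.IsKEForm S) :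
    ∃ ψ θ, M.InKH3 ψ ∧ IsLinearMap C θ ∧ S = ψ + M.wedgeKahler θ := by
  have hn : (2 * n + 1 : ℝ) ≠ 0 := by positivity
  have smul_leeForm (r : ℝ) : IsLinearMap C (r • M.leeForm S) :=
    (r • (hS.isLinearMap_leeForm M).mk' _).isLinear
  obtain ⟨ν, hν_def⟩ : ∃ ν, ν = (1 / (2 * n + 1) : ℝ) • M.leeForm S := ⟨_, rfl⟩
  have hν : IsLinearMap C ν := hν_def ▸ smul_leeForm _
  refine ⟨S + M.wedgeKahler ν, (-1 : ℝ) • ν,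
    inKH3_iff.2 ⟨hS.add (isKEForm_wedgeKahler hν), ?_⟩, ?_, ?_⟩
  · rw [leeForm_add, leeForm_wedgeKahler hν, hν_def]
    match_scalars
    field_simp
    ring
  · rw [hν_def, smul_smul]
    exact smul_leeForm _
  · rw [wedgeKahler_smul, neg_one_smul, add_neg_cancel_right]

end KEHTensors

section IntrinsicTorsion

variable {n : ℕ} {C V : Type*} [CommRing C] [Algebra ℝ C] [AddCommGroup V] [Module C V]
  [Module ℝ V] {M : AQH n C V}

lemma inKEH_iff (hn : n ≠ 0) : M.inKEH ↔
    ∃ T, M.IsKEForm T ∧ ∀ X Y Z, M.g Y (M.xi X Z) = M.intrinsicTorsionOf T X Y Z := by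
  constructor
  · rintro ⟨ψ, θ, hψ, hθ, h⟩
    obtain ⟨hψ_KE, hψ_lee⟩ := inKH3_iff.1 hψ
    have hθ := isLinearMap_iff_lin1.2 hθ
    refine ⟨_, (hψ_KE.add (isKEForm_wedgeKahler hθ)).smul (-8), ?_⟩
    rw [intrinsicTorsionOf_add_wedgeKahler hn hψ_lee hθ]
    exact h
  · rintro ⟨T, hT, h⟩
    obtain ⟨ψ, θ, hψ, hθ, hS⟩ := (hT.smul (-(1 / 8))).exists_eq_add_wedgeKahler
    have hT_eq : T = (-8 : ℝ) • (ψ + M.wedgeKahler θ) := by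
      rw [← hS]
      module
    refine ⟨ψ, θ, hψ, isLinearMap_iff_lin1.1 hθ, ?_⟩
    rw [hT_eq, intrinsicTorsionOf_add_wedgeKahler hn (inKH3_iff.1 hψ).2 hθ] at h
    exact h

end IntrinsicTorsion

section MetricConnections

variable {n : ℕ} {C V : Type*} [CommRing C] [Algebra ℝ C] [AddCommGroup V] [Module C V]
  {M : AQH n C V} {A : V → V} {T : V → V → V → C}

lemma nab_neg (M : AQH n C V) (X Y : V) : M.nab X (-Y) = -M.nab X Y :=
  map_neg (AddMonoidHom.mk' (M.nab X) (M.nab_add X)) Y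

lemma nab2_omega (M : AQH n C V) (A : V → V) (X Y Z : V) :
    M.nab2 (M.omega A) X Y Z = M.g Y (M.nabA A X Z) := by
  rw [nab2, omega, M.nab_metric, nabA, M.g_sub_right]
  simp only [omega]
  ring

lemma IsThreeForm.g_Tvec (hT : IsThreeForm T) (M : AQH n C V) (X Y Z : V) :
    M.g Y (M.Tvec T X Z) = -T X Y Z := by
  rw [← hT.swap₁₂ X, ← M.sum_mul_g_frame (hT.isLinearMap₁ X Z) Y, Tvec,
    ← (M.isLinearMap_g Y).mk'_apply, map_sum]
  exact Finset.sum_congr rfl fun i _ => by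
    rw [(M.isLinearMap_g Y).mk'_apply, M.g_smul_right, M.g_symm]

/-- The derivation action of an endomorphism `A` on the last two arguments of a `(0,3)`-tensor. -/
def derivationAct (A : V → V) (T : V → V → V → C) : V → V → V → C := fun X Y Z =>
  T X (A Y) Z + T X Y (A Z)

variable [Module ℝ V] [IsScalarTower ℝ C V]

lemma g_real_smul_right (M : AQH n C V) (r : ℝ) (X Y : V) : M.g X (r • Y) = r • M.g X Y :=
  ((M.isLinearMap_g X).mk' _).map_smul_of_tower r Y

lemma IsSkew.map_real_smul (hA : M.IsSkew A) (r : ℝ) (X : V) : A (r • X) = r • A X :=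
  (hA.isLinearMap.mk' A).map_smul_of_tower r X

lemma IsThreeForm.g_nabT (hT : IsThreeForm T) (M : AQH n C V) (X Y Z : V) :
    M.g Y (M.nabT T X Z) = M.g Y (M.nab X Z) - (1 / 2 : ℝ) • T X Y Z := by
  rw [nabT, M.g_add_right, g_real_smul_right, hT.g_Tvec, smul_neg, sub_eq_add_neg]

lemma IsThreeForm.metricConn_nabT (hT : IsThreeForm T) (M : AQH n C V) :
    M.MetricConn (M.nabT T) := fun X Y Z => by
  rw [M.g_symm (M.nabT T X Y), hT.g_nabT, hT.g_nabT, hT.swap₂₃ X Y Z, M.nab_metric,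
    M.g_symm (M.nab X Y)]
  module

lemma IsThreeForm.g_nabT_comp_sub (hT : IsThreeForm T) (hA : M.IsSkew A) (X Y Z : V) :
    M.g Y (M.nabT T X (A Z) - A (M.nabT T X Z))
      = M.nab2 (M.omega A) X Y Z - (1 / 2 : ℝ) • derivationAct A T X Y Z := by
  have move_A (W : V) : M.g Y (A W) = -M.g (A Y) W := by rw [hA, neg_neg]
  rw [nab2_omega, nabA, M.g_sub_right, M.g_sub_right, move_A, move_A, hT.g_nabT, hT.g_nabT,
    derivationAct]
  module

end MetricConnections

section QuaternionicConnections

variable {n : ℕ} {C V : Type*} [CommRing C] [Algebra ℝ C] [AddCommGroup V] [Module C V]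
  {M : AQH n C V} {T : V → V → V → C} {γI γJ γK : V → C}

lemma QuatConn.rotate {nab' : V → V → V} (h : M.QuatConn nab' γI γJ γK) :
    M.rotate.QuatConn nab' γJ γK γI :=
  ⟨h.2.1, h.2.2, h.1⟩

variable [Module ℝ V]

lemma xi_rotate (M : AQH n C V) : M.rotate.xi = M.xi := by
  funext X Y
  exact congrArg₂ (fun P Q : V => (-(1 / 4 : ℝ)) • P + (1 / 2 : ℝ) • Q)
    (add_rotate _ _ _).symm (add_rotate _ _ _).symm

variable [IsScalarTower ℝ C V]

lemma g_xi (M : AQH n C V) (X Y Z : V) :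
    M.g Y (M.xi X Z)
      = (1 / 4 : ℝ) • (M.nab2 (M.omega M.I) X (M.I Y) Z + M.nab2 (M.omega M.J) X (M.J Y) Z
          + M.nab2 (M.omega M.K) X (M.K Y) Z)
        + (1 / 2 : ℝ) • (M.lambdaI X * M.omega M.I Y Z + M.lambdaJ X * M.omega M.J Y Z
          + M.lambdaK X * M.omega M.K Y Z) := by
  simp only [xi, nab2_omega, omega, M.g_add_right, M.g_real_smul_right, M.g_smul_right,
    M.isSkew_I _ _, M.isSkew_J _ _, M.isSkew_K _ _]
  module

lemma nabA_I_add_xi (M : AQH n C V) (X Y : V) :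
    M.nabA M.I X Y + M.xi X (M.I Y) - M.I (M.xi X Y)
      = M.lambdaK X • M.J Y - M.lambdaJ X • M.K Y := by
  simp only [xi, nabA, M.isSkew_I.isLinearMap.map_add, M.isSkew_I.isLinearMap.map_sub,
    M.isSkew_J.isLinearMap.map_sub, M.isSkew_K.isLinearMap.map_sub,
    M.isSkew_I.isLinearMap.map_smul, M.isSkew_I.map_real_smul, M.I_sq, M.J_sq, M.K_sq,
    M.I_J_apply, M.J_I_apply, M.I_K_apply, M.K_I_apply, M.nab_neg,
    M.I_neg, M.J_neg]
  match_scalars <;> algebra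

end QuaternionicConnections

section SkewTorsion

variable {n : ℕ} {C V : Type*} [CommRing C] [Algebra ℝ C] [AddCommGroup V] [Module C V]
  {M : AQH n C V} {T : V → V → V → C} {γI γJ γK : V → C}

lemma inner2_derivationAct_K (hT : IsThreeForm T) (M : AQH n C V) (X : V) :
    M.inner2 (derivationAct M.K T X) (M.omega M.I) = (2 : ℝ) • M.Lam M.J T X := by
  have trace_I : ∑ i, T X (M.I (M.frame i)) (M.K (M.frame i))
      = ∑ i, T X (M.J (M.frame i)) (M.frame i) := by
    have h := M.isSkew_I.sum_apply_apply M.I_sq (b := fun Y Z => T X Y (M.J Z))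
      (fun Z => hT.isLinearMap₂ X (M.J Z))
      (fun Y => isLinearMap_comp (hT.isLinearMap₃ X Y) M.isSkew_J.isLinearMap)
    simpa only [M.J_I_apply, hT.neg₃, hT.swap₂₃ X (M.J _), Finset.sum_neg_distrib, neg_inj] using h
  have linear (Z : V) : IsLinearMap C fun Y => derivationAct M.K T X Y Z :=
    ((isLinearMap_comp (hT.isLinearMap₂ X Z) M.isSkew_K.isLinearMap).mk' _
      + (hT.isLinearMap₂ X (M.K Z)).mk' _).isLinear
  rw [M.inner2_omega M.I linear, hT.Lam_apply]
  simp only [derivationAct, M.K_I_apply, Finset.sum_add_distrib, trace_I]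
  module

lemma derivationAct_I_xiKH3 (hT : IsThreeForm T) (X Y Z : V) :
    derivationAct M.I (M.xiKH3 T) X Y Z = (4 : ℝ) • derivationAct M.I T X Y Z := by
  simp only [derivationAct, xiKH3, op23, M.I_sq, M.J_I_apply, M.K_I_apply, hT.neg₂,
    hT.neg₃]
  module

lemma derivationAct_I_tensorKahler (θ : V → C) (X Y Z : V) :
    derivationAct M.I (M.tensorKahler θ) X Y Z
      = (2 : ℝ) • (act1 M.K θ X * M.omega M.J Y Z - act1 M.J θ X * M.omega M.K Y Z) := by
  simp only [derivationAct, tensorKahler, omega, M.isSkew_I _ _, M.I_J_apply, M.I_K_apply,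
    M.J_I_apply, M.K_I_apply, M.g_neg_right]
  algebra

lemma IsKEForm.intrinsicTorsionOf_rotate (hT : M.IsKEForm T) :
    M.rotate.intrinsicTorsionOf T = M.intrinsicTorsionOf T := by
  have xiKH3_rotate : M.rotate.xiKH3 T = M.xiKH3 T := by
    funext X Y Z
    exact congrArg _ (add_rotate _ _ _).symm
  rw [intrinsicTorsionOf, xiKH3_rotate, tensorKahler_rotate, hT.leeForm_rotate, intrinsicTorsionOf]

variable [Module ℝ V]

lemma QKTtorsion.isKEForm (hT : M.QKTtorsion T) : M.IsKEForm T :=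
  IsThreeForm.isKEForm ⟨hT.1, hT.2.1⟩ hT.2.2.1

variable [IsScalarTower ℝ C V]

lemma QuatConn.nab2_omega_I (h : M.QuatConn (M.nabT T) γI γJ γK) (hT : IsThreeForm T)
    (X Y Z : V) :
    M.nab2 (M.omega M.I) X Y Z
      = γK X * M.omega M.J Y Z - γJ X * M.omega M.K Y Z
        + (1 / 2 : ℝ) • derivationAct M.I T X Y Z := by
  rw [← sub_eq_iff_eq_add, ← hT.g_nabT_comp_sub M.isSkew_I, h.1]
  simp only [M.g_sub_right, M.g_smul_right, omega]

lemma QuatConn.nab2_omega_J (h : M.QuatConn (M.nabT T) γI γJ γK) (hT : IsThreeForm T)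
    (X Y Z : V) :
    M.nab2 (M.omega M.J) X Y Z
      = γI X * M.omega M.K Y Z - γK X * M.omega M.I Y Z
        + (1 / 2 : ℝ) • derivationAct M.J T X Y Z :=
  QuatConn.nab2_omega_I (M := M.rotate) h.rotate hT X Y Z

lemma QuatConn.nab2_omega_K (h : M.QuatConn (M.nabT T) γI γJ γK) (hT : IsThreeForm T)
    (X Y Z : V) :
    M.nab2 (M.omega M.K) X Y Z
      = γJ X * M.omega M.I Y Z - γI X * M.omega M.J Y Z
        + (1 / 2 : ℝ) • derivationAct M.K T X Y Z :=
  QuatConn.nab2_omega_I (M := M.rotate.rotate) h.rotate.rotate hT X Y Z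

lemma QuatConn.lambdaJ_eq (h : M.QuatConn (M.nabT T) γI γJ γK) (hn : n ≠ 0)
    (hT : IsThreeForm T) :
    M.lambdaJ = γJ + (1 / (2 * n) : ℝ) • M.Lam M.J T := by
  funext X
  have hn' : (n : ℝ) ≠ 0 := Nat.cast_ne_zero.2 hn
  have inner_eq : M.inner2 (fun Y Z => M.nab2 (M.omega M.K) X Y Z) (M.omega M.I)
      = γJ X * M.inner2 (M.omega M.I) (M.omega M.I)
        - γI X * M.inner2 (M.omega M.J) (M.omega M.I)
        + (1 / 2 : ℝ) • M.inner2 (derivationAct M.K T X) (M.omega M.I) := by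
    simp only [h.nab2_omega_K hT, inner2, add_mul, sub_mul, mul_assoc, smul_mul_assoc,
      Finset.sum_add_distrib, Finset.sum_sub_distrib, ← Finset.mul_sum, ← Finset.smul_sum,
      mul_smul_comm]
    module
  rw [lambdaJ, inner_eq, M.inner2_omega_I_self, M.inner2_omega_J_I, inner2_derivationAct_K hT,
    Pi.add_apply, Pi.smul_apply, mul_zero, sub_zero, mul_smul_comm, mul_one, smul_add, smul_smul,
    smul_smul]
  match_scalars <;> field_simp

lemma QuatConn.lambdaI_eq (h : M.QuatConn (M.nabT T) γI γJ γK) (hn : n ≠ 0)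
    (hT : IsThreeForm T) :
    M.lambdaI = γI + (1 / (2 * n) : ℝ) • M.Lam M.I T :=
  QuatConn.lambdaJ_eq (M := M.rotate.rotate) h.rotate.rotate hn hT

lemma QuatConn.lambdaK_eq (h : M.QuatConn (M.nabT T) γI γJ γK) (hn : n ≠ 0)
    (hT : IsThreeForm T) :
    M.lambdaK = γK + (1 / (2 * n) : ℝ) • M.Lam M.K T :=
  QuatConn.lambdaJ_eq (M := M.rotate) h.rotate hn hT

lemma QuatConn.nab2_omega_I_apply_I (h : M.QuatConn (M.nabT T) γI γJ γK) (hT : IsThreeForm T)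
    (X Y Z : V) :
    M.nab2 (M.omega M.I) X (M.I Y) Z
      = (1 / 2 : ℝ) • (op23 M.I T X Y Z - T X Y Z)
        - (γJ X * M.omega M.J Y Z + γK X * M.omega M.K Y Z) := by
  simp only [h.nab2_omega_I hT, derivationAct, op23, omega, M.isSkew_I _ _, M.I_sq, M.I_J_apply,
    M.I_K_apply, M.g_neg_right, hT.neg₂]
  algebra

lemma QuatConn.g_xi_eq (h : M.QuatConn (M.nabT T) γI γJ γK) (hn : n ≠ 0) (hT : M.IsKEForm T)
    (X Y Z : V) : M.g Y (M.xi X Z) = M.intrinsicTorsionOf T X Y Z := by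
  have hT₃ := hT.toIsThreeForm
  have nab2_J : M.nab2 (M.omega M.J) X (M.J Y) Z = (1 / 2 : ℝ) • (op23 M.J T X Y Z - T X Y Z)
      - (γK X * M.omega M.K Y Z + γI X * M.omega M.I Y Z) :=
    QuatConn.nab2_omega_I_apply_I (M := M.rotate) h.rotate hT₃ X Y Z
  have nab2_K : M.nab2 (M.omega M.K) X (M.K Y) Z = (1 / 2 : ℝ) • (op23 M.K T X Y Z - T X Y Z)
      - (γI X * M.omega M.I Y Z + γJ X * M.omega M.J Y Z) :=
    QuatConn.nab2_omega_I_apply_I (M := M.rotate.rotate) h.rotate.rotate hT₃ X Y Z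
  rw [g_xi, h.nab2_omega_I_apply_I hT₃, nab2_J, nab2_K, h.lambdaI_eq hn hT₃,
    h.lambdaJ_eq hn hT₃, h.lambdaK_eq hn hT₃, hT₃.Lam_I_eq, hT.Lam_J_eq, hT.Lam_K_eq]
  simp only [intrinsicTorsionOf, xiKH3, tensorKahler, Pi.add_apply, Pi.sub_apply, Pi.smul_apply,
    Pi.neg_apply]
  algebra

lemma nab2_omega_I_eq (M : AQH n C V) (X Y Z : V) :
    M.nab2 (M.omega M.I) X Y Z
      = M.lambdaK X * M.omega M.J Y Z - M.lambdaJ X * M.omega M.K Y Z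
        - derivationAct M.I (fun X Y Z => M.g Y (M.xi X Z)) X Y Z := by
  have h := congrArg (M.g Y) (M.nabA_I_add_xi X Z)
  have move_I : M.g Y (M.I (M.xi X Z)) = -M.g (M.I Y) (M.xi X Z) := by rw [M.isSkew_I, neg_neg]
  simp only [M.g_sub_right, M.g_add_right, M.g_smul_right, ← nab2_omega, move_I] at h
  simp only [derivationAct, omega] at h ⊢
  linear_combination h

lemma g_nabT_I_sub_of_xi (hT : IsThreeForm T)
    (h : ∀ X Y Z, M.g Y (M.xi X Z) = M.intrinsicTorsionOf T X Y Z) (X Y Z : V) :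
    M.g Y (M.nabT T X (M.I Z) - M.I (M.nabT T X Z))
      = (M.lambdaK + (1 / (2 * n) : ℝ) • act1 M.K (M.leeForm T)) X * M.omega M.J Y Z
        - (M.lambdaJ + (1 / (2 * n) : ℝ) • act1 M.J (M.leeForm T)) X * M.omega M.K Y Z := by
  have derivationAct_split : derivationAct M.I (M.intrinsicTorsionOf T) X Y Z
      = (-(1 / 8) : ℝ) • derivationAct M.I (M.xiKH3 T) X Y Z
        - (1 / (4 * n) : ℝ) • derivationAct M.I (M.tensorKahler (M.leeForm T)) X Y Z := by
    simp only [derivationAct, intrinsicTorsionOf, Pi.sub_apply, Pi.smul_apply]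
    module
  simp only [hT.g_nabT_comp_sub M.isSkew_I, nab2_omega_I_eq, h]
  rw [derivationAct_split, derivationAct_I_xiKH3 hT, derivationAct_I_tensorKahler, Pi.add_apply,
    Pi.add_apply, Pi.smul_apply, Pi.smul_apply]
  algebra

lemma nabT_I_sub_of_xi (hT : IsThreeForm T)
    (h : ∀ X Y Z, M.g Y (M.xi X Z) = M.intrinsicTorsionOf T X Y Z) (X Z : V) :
    M.nabT T X (M.I Z) - M.I (M.nabT T X Z)
      = (M.lambdaK + (1 / (2 * n) : ℝ) • act1 M.K (M.leeForm T)) X • M.J Z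
        - (M.lambdaJ + (1 / (2 * n) : ℝ) • act1 M.J (M.leeForm T)) X • M.K Z :=
  M.g_right_ext fun Y => by
    rw [g_nabT_I_sub_of_xi hT h, M.g_sub_right, M.g_smul_right, M.g_smul_right, omega, omega]

lemma IsKEForm.quatConn_nabT (hT : M.IsKEForm T)
    (h : ∀ X Y Z, M.g Y (M.xi X Z) = M.intrinsicTorsionOf T X Y Z) :
    M.QuatConn (M.nabT T)
      (M.lambdaI + (1 / (2 * n) : ℝ) • act1 M.I (M.leeForm T))
      (M.lambdaJ + (1 / (2 * n) : ℝ) • act1 M.J (M.leeForm T))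
      (M.lambdaK + (1 / (2 * n) : ℝ) • act1 M.K (M.leeForm T)) := by
  have h_rotate (X Y Z : V) :
      M.rotate.g Y (M.rotate.xi X Z) = M.rotate.intrinsicTorsionOf T X Y Z := by
    rw [xi_rotate, hT.intrinsicTorsionOf_rotate]
    exact h X Y Z
  have h_rotate₂ (X Y Z : V) :
      M.rotate.rotate.g Y (M.rotate.rotate.xi X Z)
        = M.rotate.rotate.intrinsicTorsionOf T X Y Z := by
    rw [xi_rotate, hT.rotate.intrinsicTorsionOf_rotate]
    exact h_rotate X Y Z
  refine ⟨nabT_I_sub_of_xi hT.toIsThreeForm h, ?_, ?_⟩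
  · rw [← hT.leeForm_rotate]
    exact nabT_I_sub_of_xi hT.toIsThreeForm h_rotate
  · rw [← hT.leeForm_rotate, ← hT.rotate.leeForm_rotate]
    exact nabT_I_sub_of_xi hT.toIsThreeForm h_rotate₂

lemma qktTorsion_iff (hn : n ≠ 0) : M.QKTtorsion T ↔
    M.IsKEForm T ∧ ∀ X Y Z, M.g Y (M.xi X Z) = M.intrinsicTorsionOf T X Y Z := by
  refine ⟨fun hT => ?_, fun ⟨hT, h⟩ => ?_⟩
  · obtain ⟨-, -, -, -, γI, γJ, γK, hγ⟩ := id hT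
    exact ⟨hT.isKEForm, hγ.g_xi_eq hn hT.isKEForm⟩
  · refine ⟨hT.alt, hT.lin, fun X Y Z => ?_, hT.metricConn_nabT M, _, _, _, hT.quatConn_nabT h⟩
    rw [hT.calL_I, hT.calL_J, hT.calL_K]
    module

end SkewTorsion

section FundamentalFourForm

lemma wedge22_comm {C V : Type*} [CommRing C] (α β : V → V → C) : wedge22 α β = wedge22 β α := by
  funext X Y Z W
  simp only [wedge22]
  ring

variable {n : ℕ} {C V : Type*} [CommRing C] [Algebra ℝ C] [AddCommGroup V] [Module C V]
  {M : AQH n C V} {A : V → V} {T : V → V → V → C}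

lemma D_sub (M : AQH n C V) (X : V) (f h : C) : M.D X (f - h) = M.D X f - M.D X h :=
  map_sub (AddMonoidHom.mk' (M.D X) (M.D_add X)) f h

lemma nab4_add (M : AQH n C V) (φ ψ : V → V → V → V → C) :
    M.nab4 (φ + ψ) = M.nab4 φ + M.nab4 ψ := by
  funext X Y Z W U
  simp only [nab4, Pi.add_apply, M.D_add]
  ring

lemma nab4_wedge22 (M : AQH n C V) (α β : V → V → C) (X : V) :
    M.nab4 (wedge22 α β) X = wedge22 (M.nab2 α X) β + wedge22 α (M.nab2 β X) := by
  funext Y Z W U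
  simp only [nab4, nab2, wedge22, Pi.add_apply, M.D_add, M.D_sub, M.D_mul]
  ring

lemma nab4_Omega4 (M : AQH n C V) (X : V) :
    M.nab4 M.Omega4 X
      = (2 : ℝ) • (wedge22 (M.nab2 (M.omega M.I) X) (M.omega M.I)
        + wedge22 (M.nab2 (M.omega M.J) X) (M.omega M.J)
        + wedge22 (M.nab2 (M.omega M.K) X) (M.omega M.K)) := by
  have square (A : V → V) : M.nab4 (wedge22 (M.omega A) (M.omega A)) X
      = (2 : ℝ) • wedge22 (M.nab2 (M.omega A) X) (M.omega A) := by
    rw [nab4_wedge22, wedge22_comm (M.omega A), two_smul]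
  rw [smul_add, smul_add, ← square, ← square, ← square, ← Pi.add_apply, ← Pi.add_apply,
    ← nab4_add, ← nab4_add]
  rfl

lemma IsThreeForm.sum_derivationAct_frame (hT : IsThreeForm T) (hA : M.IsSkew A) (X : V) :
    ∑ i, derivationAct A T (M.frame i) (M.frame i) X = (-2 : ℝ) • M.Lam A T X := by
  have cyclic (Y Z : V) : T Y Z X = T X Y Z := by rw [hT.swap₂₃, hT.swap₁₂, neg_neg]
  simp only [derivationAct, hT.apply_self, add_zero, cyclic, hT.Lam_apply]
  rw [hA.sum_apply_left (b := T X) (hT.isLinearMap₂ X) (hT.isLinearMap₃ X)]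
  module

lemma IsThreeForm.sum_derivationAct_mul_omega (hT : IsThreeForm T) (M : AQH n C V) (A : V → V)
    (X Y Z : V) :
    ∑ i, derivationAct A T (M.frame i) Y Z * M.omega A (M.frame i) X
      = op12 A T X Y Z + op13 A T X Y Z := by
  simp only [derivationAct, omega, add_mul, Finset.sum_add_distrib, op12, op13]
  rw [M.sum_mul_g_frame (hT.isLinearMap₁ (A Y) Z), M.sum_mul_g_frame (hT.isLinearMap₁ Y (A Z))]

lemma IsThreeForm.sum_wedge22_derivationAct (hT : IsThreeForm T) (hA : M.IsSkew A) (X Y Z : V) :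
    ∑ i, wedge22 (derivationAct A T (M.frame i)) (M.omega A) (M.frame i) X Y Z
      = (2 : ℝ) • (calL A T X Y Z - wedge12 (M.Lam A T) (M.omega A) X Y Z) := by
  simp only [wedge22, Finset.sum_add_distrib, Finset.sum_sub_distrib, ← Finset.sum_mul,
    hT.sum_derivationAct_frame hA, hT.sum_derivationAct_mul_omega, calL, op12, op13, op23, wedge12]
  rw [hT.swap₁₂ (A X) (A Y) Z, hT.swap₁₂ X (A Y) (A Z), hT.swap₁₂ (A X) (A Z) Y,
    hT.swap₂₃ (A X) Y (A Z), hT.swap₁₂ X (A Z) (A Y), hT.swap₂₃ X (A Y) (A Z)]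
  algebra

variable [Module ℝ V] [IsScalarTower ℝ C V]

lemma QuatConn.nab4_Omega4 {γI γJ γK : V → C} (h : M.QuatConn (M.nabT T) γI γJ γK)
    (hT : IsThreeForm T) (X : V) :
    M.nab4 M.Omega4 X
      = wedge22 (derivationAct M.I T X) (M.omega M.I)
        + wedge22 (derivationAct M.J T X) (M.omega M.J)
        + wedge22 (derivationAct M.K T X) (M.omega M.K) := by
  rw [AQH.nab4_Omega4]
  funext Y Z W U
  simp only [wedge22, h.nab2_omega_I hT, h.nab2_omega_J hT, h.nab2_omega_K hT, Pi.add_apply,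
    Pi.smul_apply]
  algebra

lemma QKTtorsion.codiff4_Omega4 (hT : M.QKTtorsion T) :
    M.codiff4 M.Omega4 = (-6 : ℝ) • T + (-2 : ℝ) • M.wedgeKahler (M.leeForm T) := by
  have hT_KE := hT.isKEForm
  have hT₃ := hT_KE.toIsThreeForm
  obtain ⟨-, -, -, -, γI, γJ, γK, hγ⟩ := hT
  funext X Y Z
  simp only [codiff4, hγ.nab4_Omega4 hT₃, Pi.add_apply, Finset.sum_add_distrib,
    hT₃.sum_wedge22_derivationAct M.isSkew_I, hT₃.sum_wedge22_derivationAct M.isSkew_J,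
    hT₃.sum_wedge22_derivationAct M.isSkew_K, hT_KE.calL_I, hT_KE.calL_J, hT_KE.calL_K,
    hT₃.Lam_I_eq, hT_KE.Lam_J_eq, hT_KE.Lam_K_eq, wedgeKahler, wedge12, Pi.neg_apply,
    Pi.smul_apply]
  algebra

lemma QKTtorsion.thetaDOmega_eq (hT : M.QKTtorsion T) :
    M.thetaDOmega = (4 * (n - 1) : ℝ) • M.leeForm T := by
  have h_linear := hT.isKEForm.isLinearMap_leeForm M
  have codiff_KE : M.IsKEForm (M.codiff4 M.Omega4) := by
    rw [hT.codiff4_Omega4]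
    exact (hT.isKEForm.smul _).add ((isKEForm_wedgeKahler h_linear).smul _)
  have theta_eq : M.thetaDOmega = M.leeForm (M.codiff4 M.Omega4) := by
    funext X
    rw [thetaDOmega, codiff_KE.act1_J_Lam_J, codiff_KE.act1_K_Lam_K, leeForm]
    module
  rw [theta_eq, hT.codiff4_Omega4, leeForm_add, leeForm_smul, leeForm_smul,
    leeForm_wedgeKahler h_linear]
  module

lemma QKTtorsion.eq_codiff4_Omega4 (hT : M.QKTtorsion T) (hn : n ≠ 1) :
    T = (-(1 / 6) : ℝ) • M.codiff4 M.Omega4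
      - (1 / (12 * (n - 1)) : ℝ) • M.wedgeKahler M.thetaDOmega := by
  have hn' : (n - 1 : ℝ) ≠ 0 := sub_ne_zero.2 (Nat.cast_ne_one.2 hn)
  rw [hT.thetaDOmega_eq, wedgeKahler_smul, hT.codiff4_Omega4]
  match_scalars <;> field_simp
  ring

end FundamentalFourForm

end AQH

open AQH in
/-- An almost quaternion-Hermitian manifold `M` of dimension
`4n ≥ 8` is QKT (its intrinsic torsion lies in `(K+E)H`) iff there is a metric
quaternionic connection `∇^QKT = ∇ + (1/2)T` whose torsion `T` is a
skew-symmetric three-form in the `+3`-eigenspace of `𝓛`.  When `M` is QKT,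
`∇^QKT` is the unique such connection, the intrinsic torsion is
`⟨Y, ξ_X Z⟩ = (-(3/8)T + (1/8)Σ_A A_(23)T - (1/4n)Σ_A A t ⊗ ω_A)(X,Y,Z)` with
`t = IΛ_I T`, and `T = -(1/6) d*Ω - (1/(12(n-1))) Σ_A Aθ^{d*Ω} ∧ ω_A`. -/
theorem statement14 {n : ℕ} {C V : Type*} [CommRing C] [Algebra ℝ C] [AddCommGroup V]
    [Module C V] [Module ℝ V] [IsScalarTower ℝ C V]
    (hn : 2 ≤ n) (M : AQH n C V) :
    (M.inKEH ↔ ∃ T : V → V → V → C, M.QKTtorsion T) ∧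
    (M.inKEH →
      -- uniqueness of the `Sp(n)Sp(1)`-connection with skew-symmetric torsion
      (∀ T T' : V → V → V → C, M.QKTtorsion T → M.QKTtorsion T' → T = T') ∧
      -- the intrinsic torsion and the torsion form of a QKT structure
      (∀ T : V → V → V → C, M.QKTtorsion T →
        (∀ X Y Z, M.g Y (M.xi X Z) =
          (-(3/8:ℝ)) • T X Y Z
            + (1/8:ℝ) • (op23 M.I T X Y Z + op23 M.J T X Y Z + op23 M.K T X Y Z)
            - (1/(4*(n:ℝ))) •
              (act1 M.I (act1 M.I (M.Lam M.I T)) X * M.omega M.I Y Z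
                + act1 M.J (act1 M.I (M.Lam M.I T)) X * M.omega M.J Y Z
                + act1 M.K (act1 M.I (M.Lam M.I T)) X * M.omega M.K Y Z)) ∧
        (∀ X Y Z, T X Y Z =
          (-(1/6:ℝ)) • M.codiff4 M.Omega4 X Y Z
            - (1/(12*((n:ℝ)-1))) •
              (wedge12 (act1 M.I M.thetaDOmega) (M.omega M.I) X Y Z
                + wedge12 (act1 M.J M.thetaDOmega) (M.omega M.J) X Y Z
                + wedge12 (act1 M.K M.thetaDOmega) (M.omega M.K) X Y Z)))) := by
  have hn₀ : n ≠ 0 := by lia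
  have torsion_formula {T : V → V → V → C} (hT : M.QKTtorsion T) :=
    hT.eq_codiff4_Omega4 (by lia : n ≠ 1)
  refine ⟨(inKEH_iff hn₀).trans (exists_congr fun T => (qktTorsion_iff hn₀).symm), fun _ =>
    ⟨fun T T' hT hT' => (torsion_formula hT).trans (torsion_formula hT').symm,
      fun T hT => ⟨fun X Y Z => ?_, fun X Y Z => congrFun₃ (torsion_formula hT) X Y Z⟩⟩⟩
  rw [((qktTorsion_iff hn₀).1 hT).2]
  simp only [intrinsicTorsionOf, xiKH3, tensorKahler, leeForm, Pi.sub_apply, Pi.smul_apply]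
  module
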